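/- Let 𝒟 be regularly varying with exponent γ > 1 and let {G_n}_{n≥1} be generated by the erased configuration model with degree sequences IID(𝒟). Let f be the density of 𝒟, f^*(k) = k f(k)/E[𝒟] with cdf F^*, and 𝒟^* a random variable with density f^*, so E[F^*(𝒟^*)] = Σ_{ℓ≥1} f^*(ℓ) F^*(ℓ). Then for any δ > 0 and any k with f^*(k) > 0, lim_{n→∞} P(|Θ̂_n(k) − E[F^*(𝒟^*)]| 1{f_n(k) > 0} > δ) = 0, where f_n is the empirical density of the pre-erasure degrees. -/

import Mathlib

open MeasureTheory Filter
open scoped ENNReal NNReal BigOperators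

namespace ANNDPaper

/-- A function is slowly varying if `l (λ x) / l x → 1` as `x → ∞` for every `λ > 0`. -/
def SlowlyVarying (l : ℝ → ℝ) : Prop :=
  ∀ lam : ℝ, 0 < lam → Tendsto (fun x => l (lam * x) / l x) atTop (nhds 1)

/-- A function is eventually monotone if it is monotone on some interval `[K, ∞)`. -/
def EventuallyMonotone (l : ℝ → ℝ) : Prop :=
  ∃ K : ℝ, MonotoneOn l (Set.Ici K) ∨ AntitoneOn l (Set.Ici K)

/-- Cumulative distribution function of a mass function on `ℕ`. -/
noncomputable def cdfOf (f : ℕ → ℝ) (k : ℕ) : ℝ := ∑ j ∈ Finset.range (k + 1), f j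

/-- Kantorovich–Rubinstein distance between two mass functions on `ℕ`,
valued in `ℝ≥0∞`. -/
noncomputable def d1 (f g : ℕ → ℝ) : ℝ≥0∞ :=
  ∑' k : ℕ, ENNReal.ofReal |cdfOf f k - cdfOf g k|

/-- Total variation distance between two mass functions on `ℕ`, valued in `ℝ≥0∞`. -/
noncomputable def dtv (f g : ℕ → ℝ) : ℝ≥0∞ :=
  (∑' k : ℕ, ENNReal.ofReal |f k - g k|) / 2

/-- Mean of a mass function on `ℕ`. -/
noncomputable def meanPMF (f : ℕ → ℝ) : ℝ := ∑' k : ℕ, (k : ℝ) * f k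

/-- Size-biased version `f^*(k) = k f(k) / E[f]` of a mass function on `ℕ`. -/
noncomputable def sizeBiased (f : ℕ → ℝ) (k : ℕ) : ℝ := (k : ℝ) * f k / meanPMF f

/-- `L_n`, the sum of the degrees. -/
def degSum {n : ℕ} (d : Fin n → ℕ) : ℕ := ∑ i, d i

/-- Empirical degree density `f_n(k)`. -/
noncomputable def empDens {n : ℕ} (d : Fin n → ℕ) (k : ℕ) : ℝ :=
  (∑ i, if d i = k then (1 : ℝ) else 0) / (n : ℝ)

/-- Size-biased empirical degree density `f_n^*(k)`. -/
noncomputable def empSB {n : ℕ} (d : Fin n → ℕ) (k : ℕ) : ℝ :=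
  (∑ i, if d i = k then (k : ℝ) else 0) / (degSum d : ℝ)

/-- Size-biased empirical cumulative distribution function `F_n^*(ℓ)`. -/
noncomputable def empSBcdf {n : ℕ} (d : Fin n → ℕ) (l : ℕ) : ℝ :=
  (∑ i, if d i ≤ l then (d i : ℝ) else 0) / (degSum d : ℝ)

/-- Empirical joint degree distribution `h_n(k, ℓ)` of a multigraph with degrees `d`
and edge counts `g` (self-loops counted twice). -/
noncomputable def jointDens {n : ℕ} (d : Fin n → ℕ) (g : Fin n → Fin n → ℕ) (k l : ℕ) : ℝ :=
  (∑ i, ∑ j, if d i = k ∧ d j = l then (g i j : ℝ) else 0) / (degSum d : ℝ)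

/-- Average nearest neighbor degree `Φ_n(k)`. -/
noncomputable def ANND {n : ℕ} (d : Fin n → ℕ) (g : Fin n → Fin n → ℕ) (k : ℕ) : ℝ :=
  if 0 < empDens d k then (∑' l : ℕ, jointDens d g k l * (l : ℝ)) / empSB d k else 0

/-- Average nearest neighbor rank `Θ_n(k)`. -/
noncomputable def ANNR {n : ℕ} (d : Fin n → ℕ) (g : Fin n → Fin n → ℕ) (k : ℕ) : ℝ :=
  if 0 < empDens d k then (∑' l : ℕ, jointDens d g k l * empSBcdf d l) / empSB d k else 0

/-- The degree of node `i` in a multigraph with edge counts `g` (self-loops counted twice). -/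
def degOf {n : ℕ} (g : Fin n → Fin n → ℕ) (i : Fin n) : ℕ := ∑ j, g i j

/-- Erased edge counts: self-loops removed, multiple edges merged. -/
def erase {n : ℕ} (g : Fin n → Fin n → ℕ) (i j : Fin n) : ℕ :=
  if i = j then 0 else min (g i j) 1

/-- Degrees after erasure. -/
def eraseDeg {n : ℕ} (g : Fin n → Fin n → ℕ) (i : Fin n) : ℕ := ∑ j, erase g i j

/-- The stubs (half-edges) attached to the nodes, given a degree sequence `d`. -/
abbrev Stubs {n : ℕ} (d : Fin n → ℕ) : Type := (i : Fin n) × Fin (d i)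

/-- A perfect matching of the stubs: a fixed-point-free involution. -/
def Matching {n : ℕ} (d : Fin n → ℕ) : Type :=
  {σ : Equiv.Perm (Stubs d) // ∀ s, σ s ≠ s ∧ σ (σ s) = s}

instance {n : ℕ} (d : Fin n → ℕ) : MeasurableSpace (Matching d) := ⊤

/-- The uniform probability measure on perfect matchings of the stubs. -/
noncomputable def uniformMatching {n : ℕ} (d : Fin n → ℕ) : Measure (Matching d) :=
  (Nat.card (Matching d) : ℝ≥0∞)⁻¹ • Measure.count

/-- The edge counts `G_{ij}` of the configuration-model multigraph determined by a
matching of the stubs: the number of stubs of `i` matched to stubs of `j`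
(self-loops are automatically counted twice). -/
def cmEdges {n : ℕ} (d : Fin n → ℕ) (σ : Matching d) (i j : Fin n) : ℕ :=
  (Finset.univ.filter (fun s : Fin (d i) => ((σ.1 ⟨i, s⟩).1 = j))).card

/-- Parity correction: add `1` to the last coordinate if the total sum is odd,
making the total even. -/
def parityFix (n : ℕ) (x : Fin n → ℕ) (i : Fin n) : ℕ :=
  if (i : ℕ) = n - 1 ∧ (∑ j, x j) % 2 = 1 then x i + 1 else x i

/-- The law of the degree sequence `IID(𝒟)` of length `n`, where `ν` is the law of `𝒟`:
i.i.d. samples with the last one corrected for parity. -/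
noncomputable def iidLaw (n : ℕ) (ν : Measure ℕ) : Measure (Fin n → ℕ) :=
  Measure.map (parityFix n) (Measure.pi fun _ : Fin n => ν)

/-- The joint law of (degree sequence, edge counts) in the configuration model of size `n`
with degree sequence `IID(𝒟)`, where `ν` is the law of `𝒟`: sample the degrees, then an
independent uniform perfect matching of the stubs. -/
noncomputable def cmLaw (n : ℕ) (ν : Measure ℕ) :
    Measure ((Fin n → ℕ) × (Fin n → Fin n → ℕ)) :=
  (iidLaw n ν).bind fun d => (uniformMatching d).map fun σ => (d, cmEdges d σ)

/-!
Fix the degree sequence and match the stubs uniformly. A stub of a node of degree `k` is matched to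
an almost uniform other stub, so the average of `F^*` over the degrees of the neighbours of the
nodes of degree `k` has mean close to `E[F^*(𝒟^*)]`; distinct stubs are almost uncorrelated, so its
variance is `O(1 / L_n)`. Erasure changes `Θ_n(k)` by at most a constant times the proportion of
stubs at nodes that lose an edge. A node of degree `d` loses an edge with probability at most
`8 d² ∑ D_i² / L_n²`, and `∑ D_i² / L_n² → 0` as soon as `f_n^*` converges to a probability
distribution; hence, by dominated convergence against `f_n^*`, the damaged proportion vanishes in
`L¹`. Scheffé's lemma upgrades the pointwise convergence `f_n^* → f^*` to the uniform convergence
`F_n^* → F^*`. For i.i.d. degrees, `f_n^* → f^*` almost surely by the strong law of large numbers.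
-/

section PerfectMatchings

/-- The perfect matchings of the points of `S`, encoded as the fixed-point-free involutions. -/
abbrev PerfectMatching (S : Type*) : Type _ :=
  {σ : Equiv.Perm S // ∀ s, σ s ≠ s ∧ σ (σ s) = s}

namespace PerfectMatching

variable {S : Type*}

lemma apply_ne (σ : PerfectMatching S) (s : S) : σ.1 s ≠ s := (σ.2 s).1

lemma apply_apply (σ : PerfectMatching S) (s : S) : σ.1 (σ.1 s) = s := (σ.2 s).2

/-- Relabelling of the points of a perfect matching by the permutation `π`; it expresses the
exchangeability of the uniform perfect matching. -/
def conj (π : Equiv.Perm S) : PerfectMatching S ≃ PerfectMatching S :=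
  (MulAut.conj π).toEquiv.subtypeEquiv fun σ => π.forall_congr fun s => by simp

lemma conj_apply (π : Equiv.Perm S) (σ : PerfectMatching S) (s : S) :
    (conj π σ).1 (π s) = π (σ.1 s) := by
  simp [conj]

variable [Fintype S] [DecidableEq S]

lemma card_filter_apply_perm (π : Equiv.Perm S) (s s' t t' : S) :
    Finset.card {σ : PerfectMatching S | σ.1 (π s) = π t ∧ σ.1 (π s') = π t'} =
      Finset.card {σ : PerfectMatching S | σ.1 s = t ∧ σ.1 s' = t'} :=
  (Finset.card_equiv (conj π) fun σ => by simp [conj_apply]).symm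

lemma sub_one_mul_card_filter {s t : S} (hts : t ≠ s) :
    (Fintype.card S - 1 : ℝ) * Finset.card {σ : PerfectMatching S | σ.1 s = t} =
      Fintype.card (PerfectMatching S) := by
  have hconst : ∀ t' ∈ ({s}ᶜ : Finset S), Finset.card {σ : PerfectMatching S | σ.1 s = t'} =
      Finset.card {σ : PerfectMatching S | σ.1 s = t} := by
    intro t' ht'
    have h := card_filter_apply_perm (Equiv.swap t t') s s t t
    simpa only [Equiv.swap_apply_of_ne_of_ne hts.symm (by simpa [eq_comm] using ht'),
      Equiv.swap_apply_left, and_self] using h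
  rw [← Finset.card_univ (α := PerfectMatching S), Finset.card_eq_sum_card_fiberwise
    (s := .univ) (t := {s}ᶜ) (f := fun σ => σ.1 s) (fun σ _ => by simpa using σ.apply_ne s),
    Finset.sum_congr rfl hconst, Finset.sum_const, Finset.card_compl, Finset.card_singleton,
    smul_eq_mul, Nat.cast_mul, Nat.cast_sub (Fintype.card_pos_iff.2 ⟨s⟩), Nat.cast_one]

lemma apply_mem_compl {σ : PerfectMatching S} {s s' t : S} (hs : s ≠ s')
    (ht : t ∉ ({s, s'} : Finset S)) (hσ : σ.1 s = t) : σ.1 s' ∈ ({s, s', t}ᶜ : Finset S) := by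
  simp only [Finset.mem_compl, Finset.mem_insert, Finset.mem_singleton, not_or] at ht ⊢
  refine ⟨fun h => ht.2 ?_, σ.apply_ne s', fun h => hs (σ.1.injective (hσ.trans h.symm))⟩
  rw [← hσ, ← h, σ.apply_apply]

lemma sub_three_mul_card_filter {s s' t t' : S} (hs : s ≠ s') (ht : t ∉ ({s, s'} : Finset S))
    (ht' : t' ∉ ({s, s', t} : Finset S)) :
    (Fintype.card S - 3 : ℝ) *
        Finset.card {σ : PerfectMatching S | σ.1 s = t ∧ σ.1 s' = t'} =
      Finset.card {σ : PerfectMatching S | σ.1 s = t} := by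
  have hmaps : ∀ σ ∈ ({σ | σ.1 s = t} : Finset (PerfectMatching S)),
      σ.1 s' ∈ ({s, s', t}ᶜ : Finset S) :=
    fun σ hσ => apply_mem_compl hs ht ((Finset.mem_filter_univ σ).1 hσ)
  simp only [Finset.mem_insert, Finset.mem_singleton, not_or] at ht ht'
  have hconst : ∀ u ∈ ({s, s', t}ᶜ : Finset S),
      Finset.card {σ ∈ {σ : PerfectMatching S | σ.1 s = t} | σ.1 s' = u} =
        Finset.card {σ : PerfectMatching S | σ.1 s = t ∧ σ.1 s' = t'} := by
    intro u hu
    simp only [Finset.mem_compl, Finset.mem_insert, Finset.mem_singleton, not_or] at hu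
    have h := card_filter_apply_perm (Equiv.swap t' u) s s' t t'
    rwa [Equiv.swap_apply_of_ne_of_ne (Ne.symm ht'.1) (Ne.symm hu.1),
      Equiv.swap_apply_of_ne_of_ne (Ne.symm ht'.2.1) (Ne.symm hu.2.1),
      Equiv.swap_apply_of_ne_of_ne (Ne.symm ht'.2.2) (Ne.symm hu.2.2),
      Equiv.swap_apply_left, ← Finset.filter_filter] at h
  have hthree : Finset.card ({s, s', t} : Finset S) = 3 :=
    Finset.card_eq_three.2 ⟨s, s', t, hs, Ne.symm ht.1, Ne.symm ht.2, rfl⟩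
  rw [Finset.card_eq_sum_card_fiberwise hmaps, Finset.sum_congr rfl hconst, Finset.sum_const,
    Finset.card_compl, hthree, smul_eq_mul, Nat.cast_mul,
    Nat.cast_sub (hthree ▸ Finset.card_le_univ _), Nat.cast_ofNat]

lemma card_filter_div_card [Nonempty (PerfectMatching S)] {s t : S} (hts : t ≠ s) :
    (Finset.card {σ : PerfectMatching S | σ.1 s = t} : ℝ) / Fintype.card (PerfectMatching S) =
      1 / (Fintype.card S - 1) := by
  have hcard := sub_one_mul_card_filter hts
  have hne : (Fintype.card (PerfectMatching S) : ℝ) ≠ 0 := by simp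
  rw [div_eq_div_iff hne (left_ne_zero_of_mul (hcard.trans_ne hne)), ← hcard]
  ring

lemma card_filter_and_div_card [Nonempty (PerfectMatching S)] {s s' t t' : S} (hs : s ≠ s')
    (ht : t ∉ ({s, s'} : Finset S)) (ht' : t' ∉ ({s, s', t} : Finset S)) :
    (Finset.card {σ : PerfectMatching S | σ.1 s = t ∧ σ.1 s' = t'} : ℝ) /
        Fintype.card (PerfectMatching S) =
      1 / ((Fintype.card S - 1) * (Fintype.card S - 3)) := by
  have hcard := sub_three_mul_card_filter hs ht ht'
  have hone := card_filter_div_card (s := s) (t := t) (by grind)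
  have hthree : (Fintype.card S - 3 : ℝ) ≠ 0 := by
    rintro h
    have h' := sub_one_mul_card_filter (s := s) (t := t) (by grind)
    rw [← hcard, h, zero_mul, mul_zero] at h'
    exact Fintype.card_ne_zero (Nat.cast_eq_zero.1 h'.symm)
  rw [← div_div, ← hone, ← hcard, div_right_comm, mul_div_cancel_left₀ _ hthree]

lemma expect_apply [Nonempty (PerfectMatching S)] (s : S) (h : S → ℝ) :
    𝔼 σ : PerfectMatching S, h (σ.1 s) = (∑ t ∈ {s}ᶜ, h t) / (Fintype.card S - 1) := by
  rw [Fintype.expect_eq_sum_div_card, ← Finset.sum_fiberwise_of_maps_to' (t := {s}ᶜ)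
    (g := fun σ : PerfectMatching S => σ.1 s) (fun σ _ => by simpa using σ.apply_ne s),
    Finset.sum_div, Finset.sum_div]
  refine Finset.sum_congr rfl fun t ht => ?_
  rw [Finset.sum_const, nsmul_eq_mul, mul_div_right_comm,
    card_filter_div_card (by simpa using ht), one_div_mul_eq_div]

lemma sum_filter_apply_div_card [Nonempty (PerfectMatching S)] {s s' t : S} (hs : s ≠ s')
    (ht : t ∉ ({s, s'} : Finset S)) (h : S → ℝ) :
    (∑ σ : PerfectMatching S with σ.1 s = t, h (σ.1 s')) / Fintype.card (PerfectMatching S) =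
      (∑ t' ∈ {s, s', t}ᶜ, h t') / ((Fintype.card S - 1) * (Fintype.card S - 3)) := by
  rw [← Finset.sum_fiberwise_of_maps_to' (t := {s, s', t}ᶜ)
    (g := fun σ : PerfectMatching S => σ.1 s')
    (fun σ hσ => apply_mem_compl hs ht (by simpa using hσ)), Finset.sum_div, Finset.sum_div]
  refine Finset.sum_congr rfl fun t' ht' => ?_
  rw [Finset.sum_const, Finset.filter_filter, nsmul_eq_mul, mul_div_right_comm,
    card_filter_and_div_card hs ht (Finset.mem_compl.1 ht'), one_div_mul_eq_div]

lemma expect_apply_apply [Nonempty (PerfectMatching S)] {s s' : S} (hs : s ≠ s')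
    (h : S → S → ℝ) :
    𝔼 σ : PerfectMatching S, h (σ.1 s) (σ.1 s') = h s' s / (Fintype.card S - 1) +
      (∑ t ∈ {s, s'}ᶜ, ∑ t' ∈ {s, s', t}ᶜ, h t t') /
        ((Fintype.card S - 1) * (Fintype.card S - 3)) := by
  have hcompl : ({s}ᶜ : Finset S) = insert s' {s, s'}ᶜ := by
    ext t; by_cases t = s' <;> simp_all [eq_comm]
  rw [Fintype.expect_eq_sum_div_card, ← Finset.sum_fiberwise_of_maps_to (t := {s}ᶜ)
    (g := fun σ : PerfectMatching S => σ.1 s) (fun σ _ => by simpa using σ.apply_ne s),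
    hcompl, Finset.sum_insert (by simp), add_div]
  congr 1
  · have hswap : ∀ σ ∈ ({σ | σ.1 s = s'} : Finset (PerfectMatching S)),
        h (σ.1 s) (σ.1 s') = h s' s := by
      intro σ hσ
      obtain rfl : σ.1 s = s' := by simpa using hσ
      rw [σ.apply_apply]
    rw [Finset.sum_congr rfl hswap, Finset.sum_const, nsmul_eq_mul, mul_div_right_comm,
      card_filter_div_card hs.symm, one_div_mul_eq_div]
  · rw [Finset.sum_div, Finset.sum_div]
    refine Finset.sum_congr rfl fun t ht => ?_
    rw [← sum_filter_apply_div_card hs (Finset.mem_compl.1 ht)]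
    congr 1
    exact Finset.sum_congr rfl fun σ hσ => by rw [(Finset.mem_filter_univ σ).1 hσ]

lemma expect_apply_le (s : S) {h : S → ℝ} (h0 : ∀ t, 0 ≤ h t) (hS : 1 < Fintype.card S) :
    𝔼 σ : PerfectMatching S, h (σ.1 s) ≤ (∑ t, h t) / (Fintype.card S - 1) := by
  have hS' : (0 : ℝ) < Fintype.card S - 1 := sub_pos.2 (mod_cast hS)
  cases isEmpty_or_nonempty (PerfectMatching S)
  · rw [Finset.univ_eq_empty, Finset.expect_empty]
    exact div_nonneg (Finset.sum_nonneg fun t _ => h0 t) hS'.le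
  · rw [expect_apply]
    gcongr
    · exact fun t _ _ => h0 t
    · exact Finset.subset_univ _

lemma expect_apply_apply_le {s s' : S} (hs : s ≠ s') {h : S → S → ℝ} (h0 : ∀ t t', 0 ≤ h t t')
    (hS : 3 < Fintype.card S) :
    𝔼 σ : PerfectMatching S, h (σ.1 s) (σ.1 s') ≤ h s' s / (Fintype.card S - 1) +
      (∑ t, ∑ t', h t t') / ((Fintype.card S - 1) * (Fintype.card S - 3)) := by
  have h3 : (0 : ℝ) < Fintype.card S - 3 := sub_pos.2 (mod_cast hS)
  have h1 : (0 : ℝ) < Fintype.card S - 1 := by linarith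
  have hrow : ∀ t, 0 ≤ ∑ t', h t t' := fun t => Finset.sum_nonneg fun t' _ => h0 t t'
  cases isEmpty_or_nonempty (PerfectMatching S)
  · rw [Finset.univ_eq_empty, Finset.expect_empty]
    have := Finset.sum_nonneg fun t (_ : t ∈ Finset.univ) => hrow t
    have := h0 s' s
    positivity
  · rw [expect_apply_apply hs]
    gcongr
    calc ∑ t ∈ {s, s'}ᶜ, ∑ t' ∈ {s, s', t}ᶜ, h t t' ≤ ∑ t ∈ {s, s'}ᶜ, ∑ t', h t t' :=
          Finset.sum_le_sum fun t _ => Finset.sum_le_univ_sum_of_nonneg (h0 t)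
      _ ≤ ∑ t, ∑ t', h t t' := Finset.sum_le_univ_sum_of_nonneg hrow

lemma sum_compl_sum_compl_mul_le {s s' : S} (hs : s ≠ s') {ψ : S → ℝ} (hψ0 : ∑ t, ψ t = 0) :
    ∑ t ∈ {s, s'}ᶜ, ∑ t' ∈ {s, s', t}ᶜ, ψ t * ψ t' ≤ (ψ s + ψ s') ^ 2 := by
  have houter : ∑ t ∈ {s, s'}ᶜ, ψ t = -(ψ s + ψ s') := by
    have h := Finset.sum_compl_add_sum {s, s'} ψ
    rw [Finset.sum_pair hs, hψ0] at h
    linarith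
  have hinner : ∀ t ∈ ({s, s'}ᶜ : Finset S),
      ∑ t' ∈ {s, s', t}ᶜ, ψ t' = -(ψ s + ψ s' + ψ t) := by
    intro t ht
    simp only [Finset.mem_compl, Finset.mem_insert, Finset.mem_singleton, not_or] at ht
    have h := Finset.sum_compl_add_sum {s, s', t} ψ
    rw [Finset.sum_insert (by simp [hs, Ne.symm ht.1]), Finset.sum_pair (Ne.symm ht.2), hψ0] at h
    linarith
  calc ∑ t ∈ {s, s'}ᶜ, ∑ t' ∈ {s, s', t}ᶜ, ψ t * ψ t'
      ≤ ∑ t ∈ {s, s'}ᶜ, ψ t * -(ψ s + ψ s') := by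
        refine Finset.sum_le_sum fun t ht => ?_
        rw [← Finset.mul_sum, hinner t ht]
        linarith [mul_self_nonneg (ψ t)]
    _ = (ψ s + ψ s') ^ 2 := by rw [← Finset.sum_mul, houter]; ring

lemma expect_mul_apply_le {s s' : S} (hs : s ≠ s') {ψ : S → ℝ} (hψ0 : ∑ t, ψ t = 0)
    (hψ1 : ∀ t, |ψ t| ≤ 1) (hS : 3 < Fintype.card S) :
    𝔼 σ : PerfectMatching S, ψ (σ.1 s) * ψ (σ.1 s') ≤ 5 / (Fintype.card S - 1) := by
  have h3 : (1 : ℝ) ≤ Fintype.card S - 3 := by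
    have : (4 : ℝ) ≤ Fintype.card S := mod_cast hS
    linarith
  have h1 : (0 : ℝ) < Fintype.card S - 1 := by linarith
  cases isEmpty_or_nonempty (PerfectMatching S)
  · rw [Finset.univ_eq_empty, Finset.expect_empty]
    positivity
  have hmul : ψ s' * ψ s ≤ 1 := by
    rw [← mul_one 1]
    exact (le_abs_self _).trans
      ((abs_mul _ _).trans_le (mul_le_mul (hψ1 s') (hψ1 s) (abs_nonneg _) zero_le_one))
  have hsq : (ψ s + ψ s') ^ 2 ≤ 4 := by
    have := (abs_add_le (ψ s) (ψ s')).trans (add_le_add (hψ1 s) (hψ1 s'))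
    rw [← sq_abs]
    nlinarith [abs_nonneg (ψ s + ψ s')]
  rw [expect_apply_apply hs fun t t' => ψ t * ψ t']
  calc ψ s' * ψ s / (Fintype.card S - 1) + (∑ t ∈ {s, s'}ᶜ, ∑ t' ∈ {s, s', t}ᶜ, ψ t * ψ t') /
        ((Fintype.card S - 1) * (Fintype.card S - 3))
      ≤ 1 / (Fintype.card S - 1) + 4 / (Fintype.card S - 1) := by
        gcongr
        · exact (sum_compl_sum_compl_mul_le hs hψ0).trans hsq
        · exact le_mul_of_one_le_right h1.le h3
    _ = 5 / (Fintype.card S - 1) := by ring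

lemma expect_sq_sum_apply_le (K : Finset S) {ψ : S → ℝ} (hψ0 : ∑ t, ψ t = 0)
    (hψ1 : ∀ t, |ψ t| ≤ 1) (hS : 3 < Fintype.card S) :
    𝔼 σ : PerfectMatching S, (∑ s ∈ K, ψ (σ.1 s)) ^ 2 ≤ 6 * K.card := by
  have h1 : (0 : ℝ) < Fintype.card S - 1 := sub_pos.2 (mod_cast (by lia : 1 < Fintype.card S))
  have hrow : ∀ s ∈ K, ∑ s' ∈ K, 𝔼 σ : PerfectMatching S, ψ (σ.1 s) * ψ (σ.1 s') ≤ 6 := by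
    intro s hs
    rw [← Finset.add_sum_erase _ _ hs]
    have hdiag : 𝔼 σ : PerfectMatching S, ψ (σ.1 s) * ψ (σ.1 s) ≤ 1 := by
      cases isEmpty_or_nonempty (PerfectMatching S)
      · simp
      refine Finset.expect_le Finset.univ_nonempty fun σ _ => ?_
      rw [← abs_mul_abs_self, ← mul_one 1]
      exact mul_le_mul (hψ1 _) (hψ1 _) (abs_nonneg _) zero_le_one
    have hoff := Finset.sum_le_card_nsmul (K.erase s) _ _ fun s' hs' =>
      expect_mul_apply_le (Finset.ne_of_mem_erase hs').symm hψ0 hψ1 hS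
    have hcard : ((K.erase s).card : ℝ) ≤ Fintype.card S - 1 := by
      rw [le_sub_iff_add_le]
      exact_mod_cast (Finset.card_erase_add_one hs).trans_le (Finset.card_le_univ K)
    rw [nsmul_eq_mul, mul_div_assoc'] at hoff
    have : (K.erase s).card * 5 / (Fintype.card S - 1 : ℝ) ≤ 5 := by
      rw [div_le_iff₀ h1]
      linarith
    linarith
  simp_rw [sq, Finset.sum_mul_sum, Finset.expect_sum_comm]
  calc _ ≤ ∑ _s ∈ K, (6 : ℝ) := Finset.sum_le_sum hrow
    _ = 6 * K.card := by rw [Finset.sum_const, nsmul_eq_mul, mul_comm]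

end PerfectMatching

end PerfectMatchings

section ConfigurationModel

variable {n : ℕ} {d : Fin n → ℕ}

instance : Fintype (Matching d) := inferInstanceAs (Fintype (PerfectMatching (Stubs d)))

lemma card_stubs (d : Fin n → ℕ) : Fintype.card (Stubs d) = degSum d := by
  simp [degSum, Fintype.card_sigma]

lemma sum_stubs_fst (d : Fin n → ℕ) (h : Fin n → ℝ) :
    ∑ s : Stubs d, h s.1 = ∑ i, (d i : ℝ) * h i := by
  simp [Fintype.sum_sigma]

lemma degOf_cmEdges (σ : Matching d) : degOf (cmEdges d σ) = d := by
  ext i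
  rw [degOf]
  simpa [cmEdges] using (Finset.card_eq_sum_card_fiberwise (s := .univ)
    (f := fun a : Fin (d i) => (σ.1 ⟨i, a⟩).1) (t := .univ) (by simp)).symm

lemma sum_cmEdges_mul (σ : Matching d) (i : Fin n) (h : Fin n → ℝ) :
    ∑ j, (cmEdges d σ i j : ℝ) * h j = ∑ a, h (σ.1 ⟨i, a⟩).1 := by
  simp_rw [cmEdges, ← nsmul_eq_mul, ← Finset.sum_const]
  exact Finset.sum_fiberwise' .univ (fun a : Fin (d i) => (σ.1 ⟨i, a⟩).1) h

lemma cmEdges_eq_card_stubs (σ : Matching d) (i j : Fin n) :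
    cmEdges d σ i j = Finset.card {s : Stubs d | s.1 = i ∧ (σ.1 s).1 = j} := by
  rw [cmEdges, Finset.card_filter, Finset.card_filter, Fintype.sum_sigma,
    Finset.sum_eq_single i (fun b _ hb => by simp [hb]) (by simp)]
  simp

lemma cmEdges_comm (σ : Matching d) (i j : Fin n) : cmEdges d σ i j = cmEdges d σ j i := by
  rw [cmEdges_eq_card_stubs, cmEdges_eq_card_stubs]
  exact Finset.card_equiv σ.1 fun s => by simp [(σ.2 s).2, and_comm]

lemma eraseDeg_cmEdges_eq {σ : Matching d} {i : Fin n} (hloop : ∀ a, (σ.1 ⟨i, a⟩).1 ≠ i)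
    (hinj : Function.Injective fun a => (σ.1 ⟨i, a⟩).1) : eraseDeg (cmEdges d σ) i = d i := by
  rw [← congrFun (degOf_cmEdges σ) i]
  refine Finset.sum_congr rfl fun j _ => ?_
  rw [erase]
  split_ifs with hij
  · subst hij
    simp [cmEdges, hloop]
  · refine min_eq_left (Finset.card_le_one.2 fun a ha b hb => hinj ?_)
    exact ((Finset.mem_filter_univ a).1 ha).trans ((Finset.mem_filter_univ b).1 hb).symm

lemma indicator_eraseDeg_ne_le (σ : Matching d) (i : Fin n) :
    (if eraseDeg (cmEdges d σ) i ≠ d i then (1 : ℝ) else 0) ≤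
      (∑ a, if (σ.1 ⟨i, a⟩).1 = i then 1 else 0) +
        ∑ a, ∑ b with a ≠ b, if (σ.1 ⟨i, a⟩).1 = (σ.1 ⟨i, b⟩).1 then 1 else 0 := by
  have hloop : (0 : ℝ) ≤ ∑ a, if (σ.1 ⟨i, a⟩).1 = i then 1 else 0 := by positivity
  have hdouble : (0 : ℝ) ≤
    ∑ a, ∑ b with a ≠ b, if (σ.1 ⟨i, a⟩).1 = (σ.1 ⟨i, b⟩).1 then 1 else 0 := by positivity
  split_ifs with h
  swap
  · exact add_nonneg hloop hdouble
  by_cases hl : ∃ a, (σ.1 ⟨i, a⟩).1 = i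
  · obtain ⟨a, ha⟩ := hl
    refine le_add_of_le_of_nonneg ?_ hdouble
    refine le_trans ?_ (Finset.single_le_sum (fun a _ => by positivity) (Finset.mem_univ a))
    rw [if_pos ha]
  · have hinj : ¬ Function.Injective fun a => (σ.1 ⟨i, a⟩).1 :=
      fun hinj => h (eraseDeg_cmEdges_eq (not_exists.1 hl) hinj)
    obtain ⟨a, b, hab, hne⟩ := Function.not_injective_iff.1 hinj
    refine le_add_of_nonneg_of_le hloop ?_
    refine le_trans ?_ (Finset.single_le_sum (fun a _ => by positivity) (Finset.mem_univ a))
    refine le_trans ?_ (Finset.single_le_sum (fun a _ => by positivity)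
      (Finset.mem_filter.2 ⟨Finset.mem_univ b, hne⟩))
    rw [if_pos hab]

lemma expect_indicator_loop_le (i : Fin n) (a : Fin (d i)) (hL : 3 < degSum d) :
    𝔼 σ : Matching d, (if (σ.1 ⟨i, a⟩).1 = i then (1 : ℝ) else 0) ≤ d i / (degSum d - 1) := by
  refine (PerfectMatching.expect_apply_le (S := Stubs d) ⟨i, a⟩
    (h := fun t => if t.1 = i then 1 else 0) (fun t => by positivity)
    (by rw [card_stubs]; lia)).trans_eq ?_
  rw [sum_stubs_fst d fun j => if j = i then 1 else 0, card_stubs]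
  simp

lemma sum_stubs_sum_stubs_indicator (d : Fin n → ℕ) :
    ∑ t : Stubs d, ∑ t' : Stubs d, (if t.1 = t'.1 then (1 : ℝ) else 0) = ∑ j, (d j : ℝ) ^ 2 := by
  have hrow (t : Stubs d) : ∑ t' : Stubs d, (if t.1 = t'.1 then (1 : ℝ) else 0) = d t.1 := by
    simp [sum_stubs_fst d fun j => if t.1 = j then 1 else 0]
  simp_rw [hrow, sq]
  exact sum_stubs_fst d fun j => (d j : ℝ)

lemma expect_indicator_double_le (i : Fin n) {a b : Fin (d i)} (hab : a ≠ b)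
    (hL : 3 < degSum d) :
    𝔼 σ : Matching d, (if (σ.1 ⟨i, a⟩).1 = (σ.1 ⟨i, b⟩).1 then (1 : ℝ) else 0) ≤
      1 / (degSum d - 1) + (∑ j, (d j : ℝ) ^ 2) / ((degSum d - 1) * (degSum d - 3)) := by
  have hne : (⟨i, a⟩ : Stubs d) ≠ ⟨i, b⟩ := by simpa using hab
  refine (PerfectMatching.expect_apply_apply_le hne
    (h := fun t t' => if t.1 = t'.1 then 1 else 0) (fun t t' => by positivity)
    (by rwa [card_stubs])).trans_eq ?_
  rw [sum_stubs_sum_stubs_indicator, card_stubs, if_pos rfl]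

lemma degSum_le_sum_sq (d : Fin n → ℕ) : (degSum d : ℝ) ≤ ∑ j, (d j : ℝ) ^ 2 := by
  rw [degSum]
  exact_mod_cast Finset.sum_le_sum fun j _ => Nat.le_self_pow two_ne_zero (d j)

lemma expect_sum_indicator_double_le (i : Fin n) (a : Fin (d i)) (hL : 3 < degSum d) :
    𝔼 σ : Matching d,
        ∑ b with a ≠ b, (if (σ.1 ⟨i, a⟩).1 = (σ.1 ⟨i, b⟩).1 then (1 : ℝ) else 0) ≤
      d i * (1 / (degSum d - 1) +
        (∑ j, (d j : ℝ) ^ 2) / ((degSum d - 1) * (degSum d - 3))) := by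
  have h3 : (0 : ℝ) < degSum d - 3 := sub_pos.2 (mod_cast hL)
  have h1 : (0 : ℝ) < degSum d - 1 := by linarith
  have hnonneg : 0 ≤ 1 / (degSum d - 1 : ℝ) +
    (∑ j, (d j : ℝ) ^ 2) / ((degSum d - 1) * (degSum d - 3)) := by positivity
  rw [Finset.expect_sum_comm]
  calc _ ≤ ∑ b with a ≠ b, (1 / (degSum d - 1 : ℝ) +
        (∑ j, (d j : ℝ) ^ 2) / ((degSum d - 1) * (degSum d - 3))) :=
        Finset.sum_le_sum fun b hb =>
          expect_indicator_double_le i ((Finset.mem_filter_univ b).1 hb) hL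
    _ ≤ ∑ _b : Fin (d i), (1 / (degSum d - 1 : ℝ) +
        (∑ j, (d j : ℝ) ^ 2) / ((degSum d - 1) * (degSum d - 3))) :=
        Finset.sum_le_univ_sum_of_nonneg fun _ => hnonneg
    _ = _ := by rw [Finset.sum_const, Finset.card_univ, Fintype.card_fin, nsmul_eq_mul]

lemma collision_rate_le {L Q : ℝ} (hL : 4 ≤ L) (hLQ : L ≤ Q) :
    1 / (L - 1) + (1 / (L - 1) + Q / ((L - 1) * (L - 3))) ≤ 8 * (Q / L ^ 2) := by
  have h1 : 3 / 4 * L ≤ L - 1 := by linarith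
  have h3 : 1 / 4 * L ≤ L - 3 := by linarith
  calc 1 / (L - 1) + (1 / (L - 1) + Q / ((L - 1) * (L - 3)))
      ≤ 1 / (3 / 4 * L) + (1 / (3 / 4 * L) + Q / ((3 / 4 * L) * (1 / 4 * L))) := by
        gcongr <;> linarith
    _ = (8 / 3 * L + 16 / 3 * Q) / L ^ 2 := by field_simp; ring
    _ ≤ (8 / 3 * Q + 16 / 3 * Q) / L ^ 2 := by gcongr
    _ = 8 * (Q / L ^ 2) := by ring

lemma expect_indicator_eraseDeg_ne_le (i : Fin n) (hL : 3 < degSum d) :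
    𝔼 σ : Matching d, (if eraseDeg (cmEdges d σ) i ≠ d i then (1 : ℝ) else 0) ≤
      8 * d i ^ 2 * ((∑ j, (d j : ℝ) ^ 2) / degSum d ^ 2) := by
  set L := (degSum d : ℝ) with hLdef
  set Q := ∑ j, (d j : ℝ) ^ 2
  calc _ ≤ 𝔼 σ : Matching d, ((∑ a, if (σ.1 ⟨i, a⟩).1 = i then (1 : ℝ) else 0) +
        ∑ a, ∑ b with a ≠ b, if (σ.1 ⟨i, a⟩).1 = (σ.1 ⟨i, b⟩).1 then (1 : ℝ) else 0) :=
        Finset.expect_le_expect fun σ _ => indicator_eraseDeg_ne_le σ i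
    _ ≤ (∑ _a : Fin (d i), d i / (L - 1)) +
        ∑ _a : Fin (d i), d i * (1 / (L - 1) + Q / ((L - 1) * (L - 3))) := by
        rw [Finset.expect_add_distrib, Finset.expect_sum_comm, Finset.expect_sum_comm]
        gcongr with a _ a _
        · exact expect_indicator_loop_le i a hL
        · exact expect_sum_indicator_double_le i a hL
    _ = d i ^ 2 * (1 / (L - 1) + (1 / (L - 1) + Q / ((L - 1) * (L - 3)))) := by
        simp only [Finset.sum_const, Finset.card_univ, Fintype.card_fin, nsmul_eq_mul]
        ring
    _ ≤ d i ^ 2 * (8 * (Q / L ^ 2)) := by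
        gcongr
        exact collision_rate_le (by rw [hLdef]; exact_mod_cast hL) (degSum_le_sum_sq d)
    _ = 8 * d i ^ 2 * (Q / L ^ 2) := by ring

end ConfigurationModel

section Scheffe

lemma tendsto_tsum_abs_sub {α ι : Type*} {𝓕 : Filter ι} {p : ι → α → ℝ} {g : α → ℝ} {s : ℝ}
    (hp : ∀ i a, 0 ≤ p i a) (hps : ∀ᶠ i in 𝓕, HasSum (p i) s) (hg : HasSum g s)
    (hpg : ∀ a, Tendsto (p · a) 𝓕 (nhds (g a))) :
    Tendsto (fun i => ∑' a, |p i a - g a|) 𝓕 (nhds 0) := by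
  have hpos : Tendsto (fun i => ∑' a, max (g a - p i a) 0) 𝓕 (nhds 0) := by
    suffices h : Tendsto (fun i => ∑' a, max (g a - p i a) 0) 𝓕 (nhds (∑' _ : α, (0 : ℝ))) by
      rwa [tsum_zero] at h
    refine tendsto_tsum_of_dominated_convergence hg.summable.abs
      (fun a => ?_) (.of_forall fun i a => ?_)
    · simpa using ((hpg a).const_sub (g a)).max (tendsto_const_nhds (x := (0 : ℝ)))
    · rw [Real.norm_of_nonneg (le_max_right _ _)]
      exact max_le (by linarith [hp i a, le_abs_self (g a)]) (abs_nonneg _)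
  have hmass : ∀ᶠ i in 𝓕, 2 * ∑' a, max (g a - p i a) 0 = ∑' a, |p i a - g a| := by
    filter_upwards [hps] with i hi
    have habs (a : α) : 2 * max (g a - p i a) 0 = |p i a - g a| - (p i a - g a) := by
      rcases le_total (p i a) (g a) with h | h
      · rw [max_eq_left (by linarith), abs_of_nonpos (by linarith)]; ring
      · rw [max_eq_right (by linarith), abs_of_nonneg (by linarith)]; ring
    have hdiff := hi.sub hg
    rw [← tsum_mul_left, tsum_congr habs, hdiff.summable.abs.tsum_sub hdiff.summable,
      hdiff.tsum_eq, sub_self, sub_zero]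
  simpa using (hpos.const_mul 2).congr' hmass

end Scheffe

section SizeBiasedMean

variable {n : ℕ} {d : Fin n → ℕ}

/-- The mean of `w` under the size-biased empirical degree distribution `f_n^*`, that is, the
average of `w` over the degree of the node carrying a uniformly chosen stub. -/
noncomputable def sizeBiasedMean (d : Fin n → ℕ) (w : ℕ → ℝ) : ℝ :=
  (∑ i, (d i : ℝ) * w (d i)) / degSum d

lemma le_degSum (d : Fin n → ℕ) (i : Fin n) : d i ≤ degSum d :=
  Finset.single_le_sum (fun _ _ => Nat.zero_le _) (Finset.mem_univ i)

lemma empSB_nonneg (d : Fin n → ℕ) (l : ℕ) : 0 ≤ empSB d l := by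
  rw [empSB]; positivity

lemma hasSum_empSB_mul (d : Fin n → ℕ) (w : ℕ → ℝ) :
    HasSum (fun l => empSB d l * w l) (sizeBiasedMean d w) := by
  have hterm (l : ℕ) : empSB d l * w l =
      (∑ i, if l = d i then (d i : ℝ) * w (d i) else 0) / degSum d := by
    rw [empSB, div_mul_eq_mul_div, Finset.sum_mul]
    congr! 2 with i
    grind
  simp_rw [hterm]
  exact (hasSum_sum fun i _ => hasSum_ite_eq (d i) _).div_const _

lemma hasSum_empSB (hd : degSum d ≠ 0) : HasSum (empSB d) 1 := by
  have hone : sizeBiasedMean d 1 = 1 := by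
    simpa [sizeBiasedMean, degSum] using div_self (Nat.cast_ne_zero (R := ℝ).2 hd)
  simpa [hone] using hasSum_empSB_mul d 1

lemma empSBcdf_eq_sizeBiasedMean (d : Fin n → ℕ) (l : ℕ) :
    empSBcdf d l = sizeBiasedMean d fun m => if m ≤ l then 1 else 0 := by
  simp [empSBcdf, sizeBiasedMean]

lemma abs_sizeBiasedMean_sub_tsum_le {g w : ℕ → ℝ} (hd : degSum d ≠ 0) (hg : Summable g)
    (hw : ∀ l, |w l| ≤ 1) :
    |sizeBiasedMean d w - ∑' l, g l * w l| ≤ ∑' l, |empSB d l - g l| := by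
  have hdiff : Summable fun l => |empSB d l - g l| := ((hasSum_empSB hd).summable.sub hg).abs
  have hgw : Summable fun l => g l * w l :=
    hg.abs.of_norm_bounded fun l => by
      rw [norm_mul]
      exact mul_le_of_le_one_right (norm_nonneg _) (hw l)
  rw [← Real.norm_eq_abs, ← (hasSum_empSB_mul d w).tsum_eq,
    ← (hasSum_empSB_mul d w).summable.tsum_sub hgw]
  refine tsum_of_norm_bounded hdiff.hasSum fun l => ?_
  rw [← sub_mul, norm_mul]
  exact mul_le_of_le_one_right (norm_nonneg _) (hw l)

lemma cdfOf_eq_tsum (g : ℕ → ℝ) (l : ℕ) :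
    cdfOf g l = ∑' m, g m * if m ≤ l then 1 else 0 := by
  rw [tsum_eq_sum (s := Finset.range (l + 1)) (by grind), cdfOf]
  exact Finset.sum_congr rfl (by grind)

lemma abs_empSBcdf_sub_cdfOf_le {g : ℕ → ℝ} (hd : degSum d ≠ 0) (hg : Summable g) (l : ℕ) :
    |empSBcdf d l - cdfOf g l| ≤ ∑' m, |empSB d m - g m| := by
  rw [empSBcdf_eq_sizeBiasedMean, cdfOf_eq_tsum]
  exact abs_sizeBiasedMean_sub_tsum_le hd hg fun m => by split_ifs <;> simp

lemma sum_sq_div_degSum_sq (d : Fin n → ℕ) :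
    (∑ i, (d i : ℝ) ^ 2) / degSum d ^ 2 = sizeBiasedMean d fun l => min 1 (l / degSum d) := by
  rw [sizeBiasedMean, sq (degSum d : ℝ), ← div_div, Finset.sum_div]
  congr! 2 with i
  rw [min_eq_right (div_le_one_of_le₀ (mod_cast le_degSum d i) (Nat.cast_nonneg _)), sq,
    mul_div_assoc]

end SizeBiasedMean

section SizeBiasedLimit

variable {ι : Type*} {𝓕 : Filter ι} {m : ι → ℕ} {d : ∀ i, Fin (m i) → ℕ} {g : ℕ → ℝ}

lemma tendsto_tsum_abs_empSB_sub (hg : HasSum g 1) (hd : ∀ᶠ i in 𝓕, degSum (d i) ≠ 0)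
    (hdg : ∀ l, Tendsto (fun i => empSB (d i) l) 𝓕 (nhds (g l))) :
    Tendsto (fun i => ∑' l, |empSB (d i) l - g l|) 𝓕 (nhds 0) :=
  tendsto_tsum_abs_sub (fun i l => empSB_nonneg (d i) l) (hd.mono fun _ => hasSum_empSB) hg hdg

lemma tendsto_sizeBiasedMean_zero (hg : HasSum g 1) (hd : ∀ᶠ i in 𝓕, degSum (d i) ≠ 0)
    (hdg : ∀ l, Tendsto (fun i => empSB (d i) l) 𝓕 (nhds (g l))) {w : ι → ℕ → ℝ}
    (hw : ∀ i l, |w i l| ≤ 1) (hw0 : ∀ l, Tendsto (w · l) 𝓕 (nhds 0)) :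
    Tendsto (fun i => sizeBiasedMean (d i) (w i)) 𝓕 (nhds 0) := by
  have hlimit : Tendsto (fun i => ∑' l, g l * w i l) 𝓕 (nhds 0) := by
    rw [← tsum_zero (α := ℝ) (β := ℕ)]
    refine tendsto_tsum_of_dominated_convergence hg.summable.abs
      (fun l => by simpa using (hw0 l).const_mul (g l)) (.of_forall fun i l => ?_)
    rw [norm_mul]
    exact mul_le_of_le_one_right (norm_nonneg _) (hw i l)
  have hdiff : Tendsto (fun i => sizeBiasedMean (d i) (w i) - ∑' l, g l * w i l) 𝓕 (nhds 0) :=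
    squeeze_zero_norm' (hd.mono fun i hi => abs_sizeBiasedMean_sub_tsum_le hi hg.summable (hw i))
      (tendsto_tsum_abs_empSB_sub hg hd hdg)
  simpa using hdiff.add hlimit

lemma tendsto_sum_sq_div_degSum_sq (hg : HasSum g 1)
    (hd : Tendsto (fun i => degSum (d i)) 𝓕 atTop)
    (hdg : ∀ l, Tendsto (fun i => empSB (d i) l) 𝓕 (nhds (g l))) :
    Tendsto (fun i => (∑ j, (d i j : ℝ) ^ 2) / degSum (d i) ^ 2) 𝓕 (nhds 0) := by
  simp_rw [sum_sq_div_degSum_sq]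
  refine tendsto_sizeBiasedMean_zero hg (hd.eventually_ne_atTop 0) hdg
    (w := fun i l => min 1 (l / degSum (d i))) (fun i l => ?_) fun l => ?_
  · rw [abs_of_nonneg (by positivity)]
    exact min_le_left _ _
  · simpa using (tendsto_const_nhds (x := (1 : ℝ))).min
      ((tendsto_natCast_atTop_atTop.comp hd).const_div_atTop (l : ℝ))

end SizeBiasedLimit

section Erasure

variable {n : ℕ}

/-- The average of `w` over the degrees of the neighbours of the nodes of degree `k`, in a
multigraph with degrees `d` and edge counts `g`; `Θ_n(k)` is the case where `w` is the
size-biased empirical distribution function. -/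
noncomputable def neighborMean (d : Fin n → ℕ) (g : Fin n → Fin n → ℕ) (k : ℕ) (w : ℕ → ℝ) : ℝ :=
  (∑ i with d i = k, ∑ j, (g i j : ℝ) * w (d j)) / (k * Finset.card {i | d i = k})

/-- The total degree of the nodes of the multigraph `g` that lose an edge in the erasure. -/
noncomputable def damagedDegree (g : Fin n → Fin n → ℕ) : ℝ :=
  ∑ i with eraseDeg g i ≠ degOf g i, (degOf g i : ℝ)

lemma empSB_eq (d : Fin n → ℕ) (k : ℕ) :
    empSB d k = k * Finset.card {i | d i = k} / degSum d := by
  rw [empSB, ← Finset.sum_filter, Finset.sum_const, nsmul_eq_mul, mul_comm]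

lemma hasSum_jointDens_mul (d : Fin n → ℕ) (g : Fin n → Fin n → ℕ) (k : ℕ) (w : ℕ → ℝ) :
    HasSum (fun l => jointDens d g k l * w l)
      ((∑ i with d i = k, ∑ j, (g i j : ℝ) * w (d j)) / degSum d) := by
  have hterm (l : ℕ) : jointDens d g k l * w l =
      (∑ i with d i = k, ∑ j, if l = d j then (g i j : ℝ) * w (d j) else 0) / degSum d := by
    rw [jointDens, div_mul_eq_mul_div, Finset.sum_mul, Finset.sum_filter]
    congr 1
    refine Finset.sum_congr rfl fun i _ => ?_
    rw [Finset.sum_mul]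
    split_ifs with hi
    · exact Finset.sum_congr rfl (by grind)
    · simp [hi]
  simp_rw [hterm]
  exact (hasSum_sum fun i _ => hasSum_sum fun j _ => hasSum_ite_eq (d j) _).div_const _

lemma ANNR_eq_neighborMean (d : Fin n → ℕ) (g : Fin n → Fin n → ℕ) (k : ℕ) :
    ANNR d g k = neighborMean d g k (empSBcdf d) := by
  rw [ANNR, (hasSum_jointDens_mul d g k _).tsum_eq, empSB_eq, neighborMean]
  by_cases h : ∃ i, d i = k ∧ k ≠ 0
  · obtain ⟨i, hi, hk⟩ := h
    have hL : (degSum d : ℝ) ≠ 0 := by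
      have := le_degSum d i
      exact_mod_cast (by lia : degSum d ≠ 0)
    have hdens : 0 < empDens d k := by
      have hn : 0 < n := i.pos
      refine div_pos (Finset.sum_pos' (fun _ _ => by positivity) ⟨i, Finset.mem_univ i, ?_⟩)
        (mod_cast hn)
      simp [hi]
    rw [if_pos hdens, div_div_div_cancel_right₀ hL]
  · have hzero : (k : ℝ) * Finset.card {i | d i = k} = 0 := by
      by_cases hk : k = 0
      · simp [hk]
      · simp_all
    simp [hzero]

lemma abs_div_sub_div_le {A B P Q : ℝ} (hB : 0 ≤ B) (hBP : B ≤ P) (hQ : 0 < Q) :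
    |B / P - A / Q| ≤ (|B - A| + |P - Q|) / Q := by
  have hsplit : B / P - A / Q = (B - A) / Q + B / P * ((Q - P) / Q) := by
    rcases eq_or_ne P 0 with rfl | hP
    · obtain rfl : B = 0 := le_antisymm hBP hB
      ring
    · field_simp
      ring
  have hratio : |B / P| ≤ 1 := by
    rw [abs_of_nonneg (div_nonneg hB (hB.trans hBP))]
    exact div_le_one_of_le₀ hBP (hB.trans hBP)
  calc |B / P - A / Q| ≤ |(B - A) / Q| + |B / P| * |(Q - P) / Q| := by
        rw [hsplit, ← abs_mul]
        exact abs_add_le _ _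
    _ ≤ |(B - A) / Q| + 1 * |(Q - P) / Q| := by gcongr
    _ = (|B - A| + |P - Q|) / Q := by
        rw [one_mul, abs_div, abs_div, abs_of_pos hQ, abs_sub_comm Q P, add_div]

variable {g : Fin n → Fin n → ℕ}

lemma erase_le (g : Fin n → Fin n → ℕ) (i j : Fin n) : erase g i j ≤ g i j := by
  rw [erase]
  split_ifs
  exacts [Nat.zero_le _, min_le_left _ _]

lemma eraseDeg_le_degOf (g : Fin n → Fin n → ℕ) (i : Fin n) : eraseDeg g i ≤ degOf g i :=
  Finset.sum_le_sum fun j _ => erase_le g i j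

lemma erase_eq_of_eraseDeg_eq {i : Fin n} (h : eraseDeg g i = degOf g i) (j : Fin n) :
    erase g i j = g i j :=
  (Finset.sum_eq_sum_iff_of_le fun j _ => erase_le g i j).1 h j (Finset.mem_univ j)

lemma damagedDegree_nonneg (g : Fin n → Fin n → ℕ) : 0 ≤ damagedDegree g :=
  Finset.sum_nonneg fun _ _ => Nat.cast_nonneg _

lemma abs_sum_eraseDeg_sub_le {w : ℕ → ℝ} (hw : ∀ a b, a < b → |w a - w b| ≤ b) :
    |∑ i, w (eraseDeg g i) - ∑ i, w (degOf g i)| ≤ damagedDegree g := by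
  rw [← Finset.sum_sub_distrib, damagedDegree, Finset.sum_filter]
  refine (Finset.abs_sum_le_sum_abs _ _).trans (Finset.sum_le_sum fun i _ => ?_)
  split_ifs with h
  · exact hw _ _ ((eraseDeg_le_degOf g i).lt_of_ne h)
  · rw [not_not.1 h, sub_self, abs_zero]

lemma abs_card_eraseDeg_sub_le (k : ℕ) :
    |(Finset.card {i | eraseDeg g i = k} : ℝ) - Finset.card {i | degOf g i = k}| ≤
      damagedDegree g := by
  have h := abs_sum_eraseDeg_sub_le (g := g) (w := fun a => if a = k then 1 else 0)
    fun a b hab => by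
      have : (1 : ℝ) ≤ b := by exact_mod_cast (Nat.zero_le a).trans_lt hab
      split_ifs <;> simp <;> linarith
  simpa using h

lemma abs_degSum_eraseDeg_sub_le :
    |(degSum (eraseDeg g) : ℝ) - degSum (degOf g)| ≤ damagedDegree g := by
  have h := abs_sum_eraseDeg_sub_le (g := g) (w := Nat.cast) fun a b hab => by
    have : (a : ℝ) < b := mod_cast hab
    rw [abs_of_neg (by linarith)]
    linarith [(Nat.cast_nonneg a : (0 : ℝ) ≤ a)]
  simpa [degSum] using h

lemma abs_empSBcdf_eraseDeg_sub_le (hL : degSum (degOf g) ≠ 0) (l : ℕ) :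
    |empSBcdf (eraseDeg g) l - empSBcdf (degOf g) l| ≤
      2 * (damagedDegree g / degSum (degOf g)) := by
  have hnum := abs_sum_eraseDeg_sub_le (g := g) (w := fun a => if a ≤ l then (a : ℝ) else 0)
    fun a b hab => by
      have hab' : (a : ℝ) < b := mod_cast hab
      have : (0 : ℝ) ≤ a := Nat.cast_nonneg a
      rw [abs_le]
      split_ifs <;> constructor <;> linarith
  refine (abs_div_sub_div_le (Finset.sum_nonneg fun i _ => by positivity) ?_ (by positivity)).trans
    ?_
  · rw [degSum, Nat.cast_sum]
    exact Finset.sum_le_sum fun i _ => by split_ifs <;> simp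
  · rw [mul_div_assoc', two_mul]
    gcongr
    exact abs_degSum_eraseDeg_sub_le

lemma sum_mul_le_degOf (g : Fin n → Fin n → ℕ) (i : Fin n) {u : Fin n → ℝ} (hu : ∀ j, u j ≤ 1) :
    ∑ j, (g i j : ℝ) * u j ≤ degOf g i := by
  rw [degOf, Nat.cast_sum]
  exact Finset.sum_le_sum fun j _ => mul_le_of_le_one_right (Nat.cast_nonneg _) (hu j)

lemma abs_row_sub_le_of_eraseDeg_eq {i : Fin n} (hi : eraseDeg g i = degOf g i) {w w' : ℕ → ℝ}
    {η : ℝ} (hw : ∀ l, w l ∈ Set.Icc 0 1) (hw' : ∀ l, w' l ∈ Set.Icc 0 1)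
    (hη : ∀ l, |w l - w' l| ≤ η) :
    |∑ j, (erase g i j : ℝ) * w (eraseDeg g j) - ∑ j, (g i j : ℝ) * w' (degOf g j)| ≤
      ∑ j, (g i j : ℝ) * (if eraseDeg g j ≠ degOf g j then 1 else 0) + degOf g i * η := by
  rw [← Finset.sum_sub_distrib, degOf, Nat.cast_sum, Finset.sum_mul, ← Finset.sum_add_distrib]
  refine (Finset.abs_sum_le_sum_abs _ _).trans (Finset.sum_le_sum fun j _ => ?_)
  rw [erase_eq_of_eraseDeg_eq hi j, ← mul_sub, ← mul_add, abs_mul, Nat.abs_cast]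
  gcongr
  split_ifs with hj
  · have := (abs_nonneg _).trans (hη 0)
    exact (Real.dist_le_of_mem_Icc_01 (hw _) (hw' _)).trans (by linarith)
  · rw [not_not.1 hj, zero_add]
    exact hη _

lemma abs_row_sub_le (i : Fin n) (k : ℕ) {w w' : ℕ → ℝ} {η : ℝ} (hw : ∀ l, w l ∈ Set.Icc 0 1)
    (hw' : ∀ l, w' l ∈ Set.Icc 0 1) (hη : ∀ l, |w l - w' l| ≤ η) :
    |(if eraseDeg g i = k then ∑ j, (erase g i j : ℝ) * w (eraseDeg g j) else 0) -
        (if degOf g i = k then ∑ j, (g i j : ℝ) * w' (degOf g j) else 0)| ≤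
      k * (if eraseDeg g i ≠ degOf g i then (degOf g i : ℝ) else 0) +
        ∑ j, (g i j : ℝ) * (if eraseDeg g j ≠ degOf g j then 1 else 0) +
        (if degOf g i = k then k * η else 0) := by
  by_cases hi : eraseDeg g i = degOf g i
  · rw [if_neg (not_not.2 hi), mul_zero, zero_add, hi]
    split_ifs with hk
    · rw [← hk]
      exact abs_row_sub_le_of_eraseDeg_eq hi hw hw' hη
    · rw [sub_zero, abs_zero, add_zero]
      positivity
  · have hη0 : 0 ≤ η := (abs_nonneg _).trans (hη 0)
    have hdeg : (1 : ℝ) ≤ degOf g i := by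
      have := (eraseDeg_le_degOf g i).lt_of_ne hi
      exact_mod_cast (by lia : 1 ≤ degOf g i)
    have hrow (G : Fin n → Fin n → ℕ) (u : Fin n → ℝ) (hu : ∀ j, u j ∈ Set.Icc 0 1) :
        (if degOf G i = k then ∑ j, (G i j : ℝ) * u j else 0) ∈ Set.Icc (0 : ℝ) k := by
      split_ifs with hk
      · exact ⟨Finset.sum_nonneg fun j _ => mul_nonneg (Nat.cast_nonneg _) (hu j).1,
          hk ▸ sum_mul_le_degOf G i fun j => (hu j).2⟩
      · exact ⟨le_rfl, Nat.cast_nonneg k⟩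
    calc _ ≤ (k : ℝ) - 0 := Real.dist_le_of_mem_Icc
          (hrow (erase g) (fun j => w (eraseDeg g j)) fun j => hw _)
          (hrow g (fun j => w' (degOf g j)) fun j => hw' _)
      _ ≤ k * degOf g i := by rw [sub_zero]; exact le_mul_of_one_le_right (by positivity) hdeg
      _ ≤ _ := by
        rw [if_pos hi, add_assoc]
        exact le_add_of_nonneg_right (by positivity)

lemma sum_sum_mul_damaged (hg : ∀ i j, g i j = g j i) :
    ∑ i, ∑ j, (g i j : ℝ) * (if eraseDeg g j ≠ degOf g j then 1 else 0) = damagedDegree g := by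
  rw [Finset.sum_comm, damagedDegree, Finset.sum_filter]
  refine Finset.sum_congr rfl fun j _ => ?_
  simp_rw [← Finset.sum_mul, mul_ite, mul_one, mul_zero, degOf, hg j, Nat.cast_sum]

lemma abs_neighborSum_erase_sub_le (hg : ∀ i j, g i j = g j i) (k : ℕ) {w w' : ℕ → ℝ} {η : ℝ}
    (hw : ∀ l, w l ∈ Set.Icc 0 1) (hw' : ∀ l, w' l ∈ Set.Icc 0 1)
    (hη : ∀ l, |w l - w' l| ≤ η) :
    |∑ i with eraseDeg g i = k, ∑ j, (erase g i j : ℝ) * w (eraseDeg g j) -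
        ∑ i with degOf g i = k, ∑ j, (g i j : ℝ) * w' (degOf g j)| ≤
      (k + 1) * damagedDegree g + k * Finset.card {i | degOf g i = k} * η := by
  rw [Finset.sum_filter, Finset.sum_filter, ← Finset.sum_sub_distrib]
  calc _ ≤ ∑ i, (k * (if eraseDeg g i ≠ degOf g i then (degOf g i : ℝ) else 0) +
        ∑ j, (g i j : ℝ) * (if eraseDeg g j ≠ degOf g j then 1 else 0) +
        (if degOf g i = k then k * η else 0)) :=
        (Finset.abs_sum_le_sum_abs _ _).trans
          (Finset.sum_le_sum fun i _ => abs_row_sub_le i k hw hw' hη)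
    _ = _ := by
        rw [Finset.sum_add_distrib, Finset.sum_add_distrib, sum_sum_mul_damaged hg,
          ← Finset.mul_sum, ← Finset.sum_filter, ← damagedDegree, ← Finset.sum_filter,
          Finset.sum_const, nsmul_eq_mul]
        ring

lemma abs_neighborMean_erase_sub_le (hg : ∀ i j, g i j = g j i) {k : ℕ} {w w' : ℕ → ℝ} {η : ℝ}
    (hk : (0 : ℝ) < k * Finset.card {i | degOf g i = k}) (hw : ∀ l, w l ∈ Set.Icc 0 1)
    (hw' : ∀ l, w' l ∈ Set.Icc 0 1) (hη : ∀ l, |w l - w' l| ≤ η) :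
    |neighborMean (eraseDeg g) (erase g) k w - neighborMean (degOf g) g k w'| ≤
      (2 * k + 1) * damagedDegree g / (k * Finset.card {i | degOf g i = k}) + η := by
  have hnonneg : 0 ≤ ∑ i with eraseDeg g i = k, ∑ j, (erase g i j : ℝ) * w (eraseDeg g j) :=
    Finset.sum_nonneg fun i _ => Finset.sum_nonneg fun j _ =>
      mul_nonneg (Nat.cast_nonneg _) (hw _).1
  have hle : ∑ i with eraseDeg g i = k, ∑ j, (erase g i j : ℝ) * w (eraseDeg g j) ≤
      k * Finset.card {i | eraseDeg g i = k} := by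
    rw [mul_comm, ← nsmul_eq_mul]
    refine Finset.sum_le_card_nsmul _ _ _ fun i hi => ?_
    rw [← (Finset.mem_filter_univ i).1 hi]
    exact sum_mul_le_degOf (erase g) i fun j => (hw _).2
  refine (abs_div_sub_div_le hnonneg hle hk).trans ?_
  rw [div_add' _ _ _ hk.ne', ← mul_sub, abs_mul, Nat.abs_cast]
  refine div_le_div_of_nonneg_right ?_ hk.le
  have hsum := abs_neighborSum_erase_sub_le hg k hw hw' hη
  have hcard := mul_le_mul_of_nonneg_left (abs_card_eraseDeg_sub_le (g := g) k)
    (Nat.cast_nonneg (α := ℝ) k)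
  linarith

lemma empSBcdf_mem_Icc (d : Fin n → ℕ) (l : ℕ) : empSBcdf d l ∈ Set.Icc 0 1 := by
  refine ⟨by rw [empSBcdf]; positivity, div_le_one_of_le₀ ?_ (Nat.cast_nonneg _)⟩
  rw [degSum, Nat.cast_sum]
  exact Finset.sum_le_sum fun i _ => by split_ifs <;> simp

lemma empSB_le_one (d : Fin n → ℕ) (k : ℕ) : empSB d k ≤ 1 := by
  refine div_le_one_of_le₀ ?_ (Nat.cast_nonneg _)
  rw [degSum, Nat.cast_sum]
  exact Finset.sum_le_sum fun i _ => by split_ifs with h <;> simp [h]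

lemma abs_ANNR_erase_sub_le (hg : ∀ i j, g i j = g j i) {k : ℕ} {φ : ℕ → ℝ} {ε : ℝ}
    (hk : 0 < empSB (degOf g) k) (hφ : ∀ l, φ l ∈ Set.Icc 0 1)
    (hε : ∀ l, |empSBcdf (degOf g) l - φ l| ≤ ε) :
    |ANNR (eraseDeg g) (erase g) k - neighborMean (degOf g) g k φ| ≤
      (2 * k + 3) * (damagedDegree g / degSum (degOf g)) / empSB (degOf g) k + ε := by
  have hL : degSum (degOf g) ≠ 0 := by
    rintro h
    simp [empSB, h] at hk
  have hcard : (k : ℝ) * Finset.card {i | degOf g i = k} =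
      degSum (degOf g) * empSB (degOf g) k := by
    rw [empSB_eq, mul_div_cancel₀ _ (Nat.cast_ne_zero.2 hL)]
  have hη (l : ℕ) : |empSBcdf (eraseDeg g) l - φ l| ≤
      2 * (damagedDegree g / degSum (degOf g)) + ε :=
    (abs_sub_le _ _ _).trans (add_le_add (abs_empSBcdf_eraseDeg_sub_le hL l) (hε l))
  have hratio : 0 ≤ damagedDegree g / degSum (degOf g) :=
    div_nonneg (damagedDegree_nonneg g) (Nat.cast_nonneg _)
  rw [ANNR_eq_neighborMean]
  calc |neighborMean (eraseDeg g) (erase g) k (empSBcdf (eraseDeg g)) -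
        neighborMean (degOf g) g k φ|
      ≤ (2 * k + 1) * damagedDegree g / (degSum (degOf g) * empSB (degOf g) k) +
        (2 * (damagedDegree g / degSum (degOf g)) + ε) :=
        hcard ▸ abs_neighborMean_erase_sub_le hg (by rw [hcard]; positivity)
          (empSBcdf_mem_Icc _) hφ hη
    _ ≤ (2 * k + 1) * (damagedDegree g / degSum (degOf g)) / empSB (degOf g) k +
        (2 * (damagedDegree g / degSum (degOf g)) / empSB (degOf g) k + ε) := by
      rw [← div_div, mul_div_assoc]
      gcongr
      exact le_div_self (by positivity) hk (empSB_le_one _ _)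
    _ = _ := by ring

end Erasure

section Quenched

variable {n : ℕ} {d : Fin n → ℕ} {k : ℕ} {φ : ℕ → ℝ}

lemma expect_abs_le_sqrt {ι : Type*} (s : Finset ι) (Y : ι → ℝ) :
    𝔼 i ∈ s, |Y i| ≤ √(𝔼 i ∈ s, Y i ^ 2) := by
  rcases s.eq_empty_or_nonempty with rfl | hs
  · simp
  · refine Real.le_sqrt_of_sq_le ?_
    simpa [Finset.expect_const hs] using Finset.expect_mul_sq_le_sq_mul_sq s (fun i => |Y i|) 1

lemma expect_le_of_nonneg {ι : Type*} {s : Finset ι} {Y : ι → ℝ} {c : ℝ} (hc : 0 ≤ c)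
    (hY : ∀ i ∈ s, Y i ≤ c) : 𝔼 i ∈ s, Y i ≤ c := by
  rcases s.eq_empty_or_nonempty with rfl | hs
  · rwa [Finset.expect_empty]
  · exact Finset.expect_le hs hY

lemma sizeBiasedMean_mono {w w' : ℕ → ℝ} (h : ∀ i, w (d i) ≤ w' (d i)) :
    sizeBiasedMean d w ≤ sizeBiasedMean d w' :=
  div_le_div_of_nonneg_right
    (Finset.sum_le_sum fun i _ => mul_le_mul_of_nonneg_left (h i) (Nat.cast_nonneg _))
    (Nat.cast_nonneg _)

lemma sizeBiasedMean_const (hd : degSum d ≠ 0) (c : ℝ) : sizeBiasedMean d (fun _ => c) = c := by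
  have hL : (degSum d : ℝ) ≠ 0 := Nat.cast_ne_zero.2 hd
  rw [sizeBiasedMean, ← Finset.sum_mul, ← Nat.cast_sum, ← degSum, mul_div_cancel_left₀ c hL]

lemma sizeBiasedMean_mem_Icc (hd : degSum d ≠ 0) (hφ : ∀ l, φ l ∈ Set.Icc 0 1) :
    sizeBiasedMean d φ ∈ Set.Icc 0 1 :=
  ⟨(sizeBiasedMean_const hd 0).ge.trans (sizeBiasedMean_mono fun _ => (hφ _).1),
    (sizeBiasedMean_mono fun _ => (hφ _).2).trans (sizeBiasedMean_const hd 1).le⟩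

lemma damagedDegree_cmEdges (σ : Matching d) : damagedDegree (cmEdges d σ) =
    ∑ i, (d i : ℝ) * if eraseDeg (cmEdges d σ) i ≠ d i then 1 else 0 := by
  simp [damagedDegree, degOf_cmEdges, Finset.sum_filter]

lemma expect_damagedDegree_div_le (hL : 3 < degSum d) :
    𝔼 σ : Matching d, damagedDegree (cmEdges d σ) / degSum d ≤
      sizeBiasedMean d fun l => min 1 (8 * l ^ 2 * ((∑ j, (d j : ℝ) ^ 2) / degSum d ^ 2)) := by
  simp_rw [damagedDegree_cmEdges, ← Finset.expect_div, Finset.expect_sum_comm, ← Finset.mul_expect,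
    sizeBiasedMean]
  gcongr with i
  refine le_min ?_ (expect_indicator_eraseDeg_ne_le i hL)
  exact expect_le_of_nonneg zero_le_one fun σ _ => by split_ifs <;> simp

lemma card_stubs_filter (d : Fin n → ℕ) (k : ℕ) :
    (Finset.card {s : Stubs d | d s.1 = k} : ℝ) = k * Finset.card {i | d i = k} := by
  have h := sum_stubs_fst d fun i => if d i = k then 1 else 0
  rw [Finset.sum_boole] at h
  rw [h, mul_comm, ← nsmul_eq_mul, ← Finset.sum_const, Finset.sum_filter]
  exact Finset.sum_congr rfl (by grind)

lemma neighborMean_cmEdges (σ : Matching d) (k : ℕ) (φ : ℕ → ℝ) :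
    neighborMean d (cmEdges d σ) k φ =
      (∑ s : Stubs d with d s.1 = k, φ (d (σ.1 s).1)) / Finset.card {s : Stubs d | d s.1 = k} := by
  rw [neighborMean, card_stubs_filter, Finset.sum_filter, Finset.sum_filter, Fintype.sum_sigma]
  congr! 2 with i
  split_ifs
  · exact sum_cmEdges_mul σ i fun j => φ (d j)
  · simp

lemma expect_sq_neighborMean_sub_le (hL : 3 < degSum d) (hk : 0 < empSB d k)
    (hφ : ∀ l, φ l ∈ Set.Icc 0 1) :
    𝔼 σ : Matching d, (neighborMean d (cmEdges d σ) k φ - sizeBiasedMean d φ) ^ 2 ≤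
      6 / (degSum d * empSB d k) := by
  have hL0 : degSum d ≠ 0 := by lia
  have hL' : (0 : ℝ) < degSum d := mod_cast hL0.bot_lt
  set K : Finset (Stubs d) := {s | d s.1 = k}
  have hK : (K.card : ℝ) = degSum d * empSB d k := by
    rw [card_stubs_filter, empSB_eq, mul_div_cancel₀ _ hL'.ne']
  have hK0 : (K.card : ℝ) ≠ 0 := by rw [hK]; positivity
  set ψ : Stubs d → ℝ := fun t => φ (d t.1) - sizeBiasedMean d φ
  have hψ0 : ∑ t, ψ t = 0 := by
    rw [sum_stubs_fst d fun i => φ (d i) - sizeBiasedMean d φ]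
    simp_rw [mul_sub]
    rw [Finset.sum_sub_distrib, ← Finset.sum_mul, ← Nat.cast_sum, ← degSum, sizeBiasedMean,
      mul_div_cancel₀ _ hL'.ne', sub_self]
  have hψ1 (t : Stubs d) : |ψ t| ≤ 1 :=
    Real.dist_le_of_mem_Icc_01 (hφ _) (sizeBiasedMean_mem_Icc hL0 hφ)
  have hmean (σ : Matching d) :
      neighborMean d (cmEdges d σ) k φ - sizeBiasedMean d φ = (∑ s ∈ K, ψ (σ.1 s)) / K.card := by
    rw [neighborMean_cmEdges, Finset.sum_sub_distrib, Finset.sum_const, nsmul_eq_mul, sub_div,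
      mul_div_cancel_left₀ _ hK0]
  simp_rw [hmean, div_pow, ← Finset.expect_div]
  rw [← hK, div_le_div_iff₀ (by positivity) (by positivity), sq (K.card : ℝ), ← mul_assoc]
  gcongr
  exact PerfectMatching.expect_sq_sum_apply_le K hψ0 hψ1 (by rwa [card_stubs])

lemma expect_abs_neighborMean_sub_le (hL : 3 < degSum d) (hk : 0 < empSB d k)
    (hφ : ∀ l, φ l ∈ Set.Icc 0 1) :
    𝔼 σ : Matching d, |neighborMean d (cmEdges d σ) k φ - sizeBiasedMean d φ| ≤
      √(6 / (degSum d * empSB d k)) :=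
  (expect_abs_le_sqrt _ _).trans (Real.sqrt_le_sqrt (expect_sq_neighborMean_sub_le hL hk hφ))

lemma cdfOf_mem_Icc {g : ℕ → ℝ} (hg : HasSum g 1) (hg0 : ∀ l, 0 ≤ g l) (l : ℕ) :
    cdfOf g l ∈ Set.Icc 0 1 :=
  ⟨Finset.sum_nonneg fun _ _ => hg0 _, sum_le_hasSum _ (fun _ _ => hg0 _) hg⟩

lemma expect_abs_ANNR_erase_sub_le {g : ℕ → ℝ} (hg : HasSum g 1) (hg0 : ∀ l, 0 ≤ g l)
    (hL : 3 < degSum d) (hk : 0 < empSB d k) :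
    𝔼 σ : Matching d, |ANNR (eraseDeg (cmEdges d σ)) (erase (cmEdges d σ)) k -
        ∑' l, g l * cdfOf g l| ≤
      (2 * k + 3) * (sizeBiasedMean d fun l =>
          min 1 (8 * l ^ 2 * ((∑ j, (d j : ℝ) ^ 2) / degSum d ^ 2))) / empSB d k +
        √(6 / (degSum d * empSB d k)) + 2 * ∑' l, |empSB d l - g l| := by
  have hL0 : degSum d ≠ 0 := by lia
  set τ := ∑' l, |empSB d l - g l|
  have hφ := cdfOf_mem_Icc hg hg0
  have hlimit : |sizeBiasedMean d (cdfOf g) - ∑' l, g l * cdfOf g l| ≤ τ :=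
    abs_sizeBiasedMean_sub_tsum_le hL0 hg.summable fun l => by
      rw [abs_of_nonneg (hφ l).1]
      exact (hφ l).2
  have hpoint (σ : Matching d) : |ANNR (eraseDeg (cmEdges d σ)) (erase (cmEdges d σ)) k -
        ∑' l, g l * cdfOf g l| ≤
      (2 * k + 3) * (damagedDegree (cmEdges d σ) / degSum d) / empSB d k + 2 * τ +
        |neighborMean d (cmEdges d σ) k (cdfOf g) - sizeBiasedMean d (cdfOf g)| := by
    have hdeg := degOf_cmEdges σ
    have herase := abs_ANNR_erase_sub_le (cmEdges_comm σ) (by rwa [hdeg]) hφ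
      (by rw [hdeg]; exact abs_empSBcdf_sub_cdfOf_le hL0 hg.summable)
    rw [hdeg] at herase
    refine (abs_sub_le _ (neighborMean d (cmEdges d σ) k (cdfOf g)) _).trans ?_
    have := abs_sub_le (neighborMean d (cmEdges d σ) k (cdfOf g)) (sizeBiasedMean d (cdfOf g))
      (∑' l, g l * cdfOf g l)
    linarith
  have hτ : 𝔼 _σ : Matching d, 2 * τ ≤ 2 * τ :=
    expect_le_of_nonneg (mul_nonneg zero_le_two (tsum_nonneg fun _ => abs_nonneg _))
      fun _ _ => le_rfl
  refine (Finset.expect_le_expect fun σ _ => hpoint σ).trans ?_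
  rw [Finset.expect_add_distrib, Finset.expect_add_distrib, ← Finset.expect_div,
    ← Finset.mul_expect, add_right_comm]
  gcongr
  · exact expect_damagedDegree_div_le hL
  · exact expect_abs_neighborMean_sub_le hL hk hφ

end Quenched

section QuenchedLimit

variable {ι : Type*} {𝓕 : Filter ι} {m : ι → ℕ} {d : ∀ i, Fin (m i) → ℕ} {g : ℕ → ℝ}

theorem tendsto_expect_abs_ANNR_erase (hg : HasSum g 1) (hg0 : ∀ l, 0 ≤ g l) {k : ℕ}
    (hk : 0 < g k) (hd : Tendsto (fun i => degSum (d i)) 𝓕 atTop)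
    (hdg : ∀ l, Tendsto (fun i => empSB (d i) l) 𝓕 (nhds (g l))) :
    Tendsto (fun i => 𝔼 σ : Matching (d i),
      |ANNR (eraseDeg (cmEdges (d i) σ)) (erase (cmEdges (d i) σ)) k - ∑' l, g l * cdfOf g l|)
      𝓕 (nhds 0) := by
  have hd0 := hd.eventually_ne_atTop 0
  have hdamage : Tendsto (fun i => sizeBiasedMean (d i) fun l =>
      min 1 (8 * l ^ 2 * ((∑ j, (d i j : ℝ) ^ 2) / degSum (d i) ^ 2))) 𝓕 (nhds 0) := by
    refine tendsto_sizeBiasedMean_zero hg hd0 hdg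
      (w := fun i l => min 1 (8 * l ^ 2 * ((∑ j, (d i j : ℝ) ^ 2) / degSum (d i) ^ 2)))
      (fun i l => ?_) fun l => ?_
    · rw [abs_of_nonneg (by positivity)]
      exact min_le_left _ _
    · simpa using (tendsto_const_nhds (x := (1 : ℝ))).min
        ((tendsto_sum_sq_div_degSum_sq hg hd hdg).const_mul (8 * l ^ 2 : ℝ))
  have hvariance : Tendsto (fun i => √(6 / (degSum (d i) * empSB (d i) k))) 𝓕 (nhds 0) := by
    rw [← Real.sqrt_zero]
    exact (((tendsto_natCast_atTop_atTop.comp hd).atTop_mul_pos hk (hdg k)).const_div_atTop 6).sqrt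
  have hbound := (((hdamage.const_mul (2 * k + 3 : ℝ)).div (hdg k) hk.ne').add hvariance).add
    ((tendsto_tsum_abs_empSB_sub hg hd0 hdg).const_mul 2)
  rw [mul_zero, zero_div, add_zero, mul_zero, add_zero] at hbound
  refine squeeze_zero' (.of_forall fun i => Finset.expect_nonneg fun _ _ => abs_nonneg _) ?_ hbound
  filter_upwards [hd.eventually_gt_atTop 3, (hdg k).eventually_const_lt hk] with i hL hki
  exact expect_abs_ANNR_erase_sub_le hg hg0 hL hki

end QuenchedLimit

section UniformMatching

variable {n : ℕ} {d : Fin n → ℕ}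

lemma uniformMatching_apply (s : Set (Matching d)) :
    uniformMatching d s = ENNReal.ofReal (𝔼 σ, s.indicator 1 σ) := by
  classical
  rcases isEmpty_or_nonempty (Matching d)
  · simp [Set.eq_empty_of_isEmpty s]
  · rw [uniformMatching, Measure.smul_apply, Measure.count_apply .of_discrete,
      Fintype.expect_eq_sum_div_card, ENNReal.ofReal_div_of_pos (mod_cast Fintype.card_pos),
      Nat.card_eq_fintype_card, ENNReal.ofReal_natCast, smul_eq_mul, mul_comm, ← div_eq_mul_inv]
    rw [Set.encard_eq_coe_toFinset_card, ← Set.filter_mem_univ_eq_toFinset]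
    simp [Set.indicator_apply]

lemma uniformMatching_le_one (s : Set (Matching d)) : uniformMatching d s ≤ 1 := by
  rw [uniformMatching_apply, ENNReal.ofReal_le_one]
  exact expect_le_of_nonneg zero_le_one fun σ _ => Set.indicator_le_self' (by simp) σ

lemma uniformMatching_lt_le {X : Matching d → ℝ} (hX : ∀ σ, 0 ≤ X σ) {δ : ℝ} (hδ : 0 < δ) :
    uniformMatching d {σ | δ < X σ} ≤ ENNReal.ofReal ((𝔼 σ, X σ) / δ) := by
  rw [uniformMatching_apply, Finset.expect_div]
  refine ENNReal.ofReal_le_ofReal (Finset.expect_le_expect fun σ _ => ?_)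
  refine Set.indicator_le' (fun σ hσ => ?_) (fun σ _ => div_nonneg (hX σ) hδ.le) σ
  exact (one_le_div₀ hδ).2 (le_of_lt hσ)

end UniformMatching

section Independence

variable {X : Type*} [MeasurableSpace X] (ν : Measure X) [IsProbabilityMeasure ν]

lemma map_comp_infinitePi {ι κ : Type*} [Fintype κ] {e : κ → ι} (he : e.Injective) :
    (Measure.infinitePi fun _ : ι => ν).map (· ∘ e) = Measure.pi fun _ : κ => ν := by
  have hind := (ProbabilityTheory.iIndepFun_infinitePi (P := fun _ : ι => ν)
    (X := fun _ x => x) fun _ => measurable_id).precomp he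
  rw [ProbabilityTheory.iIndepFun_iff_map_fun_eq_pi_map
    fun i => (measurable_pi_apply _).aemeasurable] at hind
  simp_rw [Measure.infinitePi_map_eval] at hind
  exact hind

lemma ae_tendsto_average {h : X → ℝ} (hm : Measurable h) (hi : Integrable h ν) :
    ∀ᵐ ω ∂Measure.infinitePi fun _ : ℕ => ν,
      Tendsto (fun n : ℕ => (∑ i ∈ Finset.range n, h (ω i)) / n) atTop (nhds (∫ x, h x ∂ν)) := by
  have hmp (i : ℕ) := measurePreserving_eval_infinitePi (fun _ : ℕ => ν) i
  have hmean : ∫ ω, h (ω 0) ∂Measure.infinitePi (fun _ : ℕ => ν) = ∫ x, h x ∂ν :=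
    (integral_map (hmp 0).aemeasurable hm.aestronglyMeasurable).symm.trans (by rw [(hmp 0).map_eq])
  rw [← hmean]
  refine ProbabilityTheory.strong_law_ae_real (fun i (ω : ℕ → X) => h (ω i))
    ((hmp 0).integrable_comp_of_integrable hi) (fun i j hij => ?_) fun i => ?_
  · exact (ProbabilityTheory.iIndepFun_infinitePi (P := fun _ : ℕ => ν) fun _ => hm).indepFun hij
  · have hident : ProbabilityTheory.IdentDistrib (fun ω : ℕ → X => ω i) (fun ω => ω 0)
        (Measure.infinitePi fun _ => ν) (Measure.infinitePi fun _ => ν) :=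
      ⟨(hmp i).aemeasurable, (hmp 0).aemeasurable, (hmp i).map_eq.trans (hmp 0).map_eq.symm⟩
    exact hident.comp hm

end Independence

section IIDDegrees

/-- The degree sequence `IID(𝒟)` of length `n` read off from an infinite i.i.d. sequence `ω`, which
couples the sequences of all lengths on one probability space. -/
def iidDegrees (n : ℕ) (ω : ℕ → ℕ) : Fin n → ℕ :=
  parityFix n fun i => ω i

lemma abs_sum_parityFix_sub_le {n : ℕ} (x : Fin n → ℕ) {F : ℕ → ℝ}
    (hF : ∀ m, |F (m + 1) - F m| ≤ 1) : |∑ i, F (parityFix n x i) - ∑ i, F (x i)| ≤ 1 := by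
  rw [← Finset.sum_sub_distrib]
  calc |∑ i, (F (parityFix n x i) - F (x i))|
      ≤ ∑ i : Fin n, if (i : ℕ) = n - 1 then 1 else 0 := by
        refine (Finset.abs_sum_le_sum_abs _ _).trans (Finset.sum_le_sum fun i _ => ?_)
        rw [parityFix]
        split_ifs with hfix hlast
        all_goals first | exact hF _ | simp_all
    _ ≤ 1 := by
        rw [Finset.sum_boole]
        exact_mod_cast Finset.card_le_one.2 fun a ha b hb => by grind

variable (ν : Measure ℕ) [IsProbabilityMeasure ν]

lemma ae_tendsto_average_iidDegrees {F : ℕ → ℝ} (hF : ∀ m, |F (m + 1) - F m| ≤ 1)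
    (hi : Integrable F ν) :
    ∀ᵐ ω ∂Measure.infinitePi fun _ : ℕ => ν,
      Tendsto (fun n : ℕ => (∑ i, F (iidDegrees n ω i)) / n) atTop (nhds (∫ m, F m ∂ν)) := by
  filter_upwards [ae_tendsto_average ν (measurable_of_countable F) hi] with ω hω
  have hfix : Tendsto (fun n : ℕ =>
      (∑ i, F (iidDegrees n ω i) - ∑ i ∈ Finset.range n, F (ω i)) / n) atTop (nhds 0) := by
    refine squeeze_zero_norm (fun n => ?_) tendsto_one_div_atTop_nhds_zero_nat
    rw [norm_div, RCLike.norm_natCast, ← Fin.sum_univ_eq_sum_range (fun i => F (ω i))]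
    gcongr
    exact abs_sum_parityFix_sub_le _ hF
  refine (add_zero (∫ m, F m ∂ν) ▸ hω.add hfix).congr fun n => ?_
  rw [← add_div, add_sub_cancel]

lemma measurable_iidDegrees (n : ℕ) : Measurable (iidDegrees n) :=
  (measurable_of_countable (parityFix n)).comp (by fun_prop)

lemma iidLaw_eq_map (n : ℕ) :
    iidLaw n ν = (Measure.infinitePi fun _ : ℕ => ν).map (iidDegrees n) := by
  rw [iidLaw, ← map_comp_infinitePi ν Fin.val_injective,
    Measure.map_map (measurable_of_countable _) (by fun_prop)]
  rfl

lemma cmLaw_apply (n : ℕ) (s : Set ((Fin n → ℕ) × (Fin n → Fin n → ℕ))) :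
    cmLaw n ν s = ∫⁻ ω, uniformMatching (iidDegrees n ω)
      {σ | (iidDegrees n ω, cmEdges (iidDegrees n ω) σ) ∈ s} ∂Measure.infinitePi fun _ => ν := by
  rw [cmLaw, Measure.bind_apply .of_discrete (measurable_of_countable _).aemeasurable,
    iidLaw_eq_map, lintegral_map (measurable_of_countable _) (measurable_iidDegrees n)]
  exact lintegral_congr fun ω => Measure.map_apply .of_discrete .of_discrete

lemma tendsto_cmLaw_zero {E : ∀ n, Set ((Fin n → ℕ) × (Fin n → Fin n → ℕ))}
    (hE : ∀ᵐ ω ∂Measure.infinitePi fun _ : ℕ => ν,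
      Tendsto (fun n => uniformMatching (iidDegrees n ω)
        {σ | (iidDegrees n ω, cmEdges (iidDegrees n ω) σ) ∈ E n}) atTop (nhds 0)) :
    Tendsto (fun n => cmLaw n ν (E n)) atTop (nhds 0) := by
  simp_rw [cmLaw_apply]
  rw [← lintegral_zero (μ := Measure.infinitePi fun _ : ℕ => ν)]
  refine tendsto_lintegral_of_dominated_convergence 1 (fun n => ?_)
    (fun n => .of_forall fun ω => uniformMatching_le_one _) (by simp) hE
  exact (measurable_of_countable fun d : Fin n → ℕ =>
    uniformMatching d {σ | (d, cmEdges d σ) ∈ E n}).comp (measurable_iidDegrees n)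

end IIDDegrees

section SizeBiased

variable {f : ℕ → ℝ}

lemma meanPMF_pos (hf : ∀ l, 0 ≤ f l) (hmean : Summable fun l : ℕ => (l : ℝ) * f l) {k : ℕ}
    (hk : k ≠ 0) (hfk : 0 < f k) : 0 < meanPMF f :=
  hmean.tsum_pos (fun l => mul_nonneg (Nat.cast_nonneg l) (hf l)) k (by positivity)

lemma sizeBiased_pos_iff (hf : ∀ l, 0 ≤ f l) {k : ℕ} :
    0 < sizeBiased f k ↔ (Summable fun l : ℕ => (l : ℝ) * f l) ∧ k ≠ 0 ∧ 0 < f k := by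
  refine ⟨fun h => ⟨?_, ?_, (hf k).lt_of_ne' ?_⟩, fun ⟨hmean, hk, hfk⟩ => ?_⟩
  · by_contra hdiv
    -- A divergent mean has the junk value `0`, which makes `sizeBiased f` vanish identically.
    simp [sizeBiased, meanPMF, tsum_eq_zero_of_not_summable hdiv] at h
  · rintro rfl
    simp [sizeBiased] at h
  · intro hfk
    simp [sizeBiased, hfk] at h
  · have := meanPMF_pos hf hmean hk hfk
    rw [sizeBiased]
    positivity

lemma hasSum_sizeBiased (hf : ∀ l, 0 ≤ f l) {k : ℕ} (hk : 0 < sizeBiased f k) :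
    HasSum (sizeBiased f) 1 := by
  obtain ⟨hmean, hk0, hfk⟩ := (sizeBiased_pos_iff hf).1 hk
  have h := hmean.hasSum.div_const (meanPMF f)
  rwa [← meanPMF, div_self (meanPMF_pos hf hmean hk0 hfk).ne'] at h

end SizeBiased

section MassFunction

variable {ν : Measure ℕ} {f : ℕ → ℝ}

lemma integrable_natCast [IsFiniteMeasure ν] (hf : ∀ k, f k = (ν {k}).toReal)
    (hmean : Summable fun l : ℕ => (l : ℝ) * f l) : Integrable (fun l : ℕ => (l : ℝ)) ν := by
  rw [← ν.sum_smul_dirac]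
  refine integrable_sum_dirac (fun l => measure_ne_top _ _) (hmean.congr fun l => ?_)
  rw [hf, mul_comm, RCLike.norm_natCast]

lemma integral_natCast_eq_meanPMF (hf : ∀ k, f k = (ν {k}).toReal)
    (hi : Integrable (fun l : ℕ => (l : ℝ)) ν) : ∫ l : ℕ, (l : ℝ) ∂ν = meanPMF f := by
  rw [integral_countable hi]
  exact tsum_congr fun l => by rw [hf, smul_eq_mul, mul_comm, measureReal_def]

lemma integral_indicator_eq (hf : ∀ k, f k = (ν {k}).toReal) (l : ℕ) :
    ∫ m, (if m = l then 1 else 0) ∂ν = f l := by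
  rw [hf, ← measureReal_def, ← integral_indicator_one .of_discrete]
  simp [Set.indicator_apply]

end MassFunction

section SizeBiasedConvergence

lemma empSB_eq_div {n : ℕ} (d : Fin n → ℕ) (l : ℕ) :
    empSB d l = l * empDens d l / (degSum d / n) := by
  rcases eq_or_ne n 0 with rfl | hn
  · simp [empSB, empDens]
  · rw [empDens, mul_div_assoc', div_div_div_cancel_right₀ (Nat.cast_ne_zero.2 hn), empSB,
      Finset.mul_sum]
    simp only [mul_ite, mul_one, mul_zero]

lemma tendsto_empSB {d : ∀ n, Fin n → ℕ} {p μ : ℝ} {l : ℕ}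
    (hp : Tendsto (fun n => empDens (d n) l) atTop (nhds p))
    (hd : Tendsto (fun n => (degSum (d n) / n : ℝ)) atTop (nhds μ)) (hμ : μ ≠ 0) :
    Tendsto (fun n => empSB (d n) l) atTop (nhds (l * p / μ)) := by
  simp_rw [empSB_eq_div]
  exact (hp.const_mul _).div hd hμ

lemma tendsto_degSum_atTop {d : ∀ n, Fin n → ℕ} {μ : ℝ}
    (hd : Tendsto (fun n => (degSum (d n) / n : ℝ)) atTop (nhds μ)) (hμ : 0 < μ) :
    Tendsto (fun n => degSum (d n)) atTop atTop := by
  rw [← tendsto_natCast_atTop_iff (R := ℝ)]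
  refine (tendsto_natCast_atTop_atTop.atTop_mul_pos hμ hd).congr' ?_
  filter_upwards [eventually_ne_atTop 0] with n hn
  exact mul_div_cancel₀ _ (Nat.cast_ne_zero.2 hn)

lemma ae_tendsto_empDens_iidDegrees {ν : Measure ℕ} [IsProbabilityMeasure ν] {f : ℕ → ℝ}
    (hf : ∀ k, f k = (ν {k}).toReal) : ∀ᵐ ω ∂Measure.infinitePi fun _ : ℕ => ν,
      ∀ l, Tendsto (fun n => empDens (iidDegrees n ω) l) atTop (nhds (f l)) := by
  refine ae_all_iff.2 fun l => ?_
  rw [← integral_indicator_eq hf]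
  refine ae_tendsto_average_iidDegrees ν (F := fun m => if m = l then 1 else 0) (fun m => ?_) ?_
  · split_ifs <;> simp
  · refine .of_bound .of_discrete 1 (.of_forall fun m => ?_)
    split_ifs <;> simp

lemma ae_tendsto_degSum_iidDegrees_div {ν : Measure ℕ} [IsProbabilityMeasure ν] {f : ℕ → ℝ}
    (hf : ∀ k, f k = (ν {k}).toReal) (hmean : Summable fun l : ℕ => (l : ℝ) * f l) :
    ∀ᵐ ω ∂Measure.infinitePi fun _ : ℕ => ν,
      Tendsto (fun n => (degSum (iidDegrees n ω) / n : ℝ)) atTop (nhds (meanPMF f)) := by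
  have hi := integrable_natCast hf hmean
  simp_rw [← integral_natCast_eq_meanPMF hf hi, degSum, Nat.cast_sum]
  exact ae_tendsto_average_iidDegrees ν (by simp) hi

end SizeBiasedConvergence

lemma uniformMatching_ANNR_erase_le {n : ℕ} (d : Fin n → ℕ) (k : ℕ) (c : ℝ) {δ : ℝ} (hδ : 0 < δ) :
    uniformMatching d {σ | δ < if 0 < empDens d k then
        |ANNR (eraseDeg (cmEdges d σ)) (erase (cmEdges d σ)) k - c| else 0} ≤
      ENNReal.ofReal ((𝔼 σ : Matching d,
        |ANNR (eraseDeg (cmEdges d σ)) (erase (cmEdges d σ)) k - c|) / δ) := by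
  refine (measure_mono fun σ hσ => ?_).trans (uniformMatching_lt_le (fun σ => abs_nonneg _) hδ)
  refine lt_of_lt_of_le (α := ℝ) hσ ?_
  split_ifs
  exacts [le_rfl, abs_nonneg _]

theorem stmt13_general (ν : Measure ℕ) [IsProbabilityMeasure ν] (f : ℕ → ℝ)
    (hf : ∀ k, f k = (ν {k}).toReal) (hmean : Summable fun l : ℕ => (l : ℝ) * f l)
    (k : ℕ) (hk0 : k ≠ 0) (hfk : 0 < f k) (δ : ℝ) (hδ : 0 < δ) :
    Tendsto (fun n : ℕ =>
        ((cmLaw n ν) {p : (Fin n → ℕ) × (Fin n → Fin n → ℕ) |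
            δ < (if 0 < empDens p.1 k then
                |ANNR (eraseDeg p.2) (erase p.2) k -
                  ∑' j : ℕ, sizeBiased f j * cdfOf (sizeBiased f) j|
              else 0)}).toReal)
      atTop (nhds 0) := by
  have hf0 (l : ℕ) : 0 ≤ f l := hf l ▸ ENNReal.toReal_nonneg
  have hμ := meanPMF_pos hf0 hmean hk0 hfk
  have hk := (sizeBiased_pos_iff hf0).2 ⟨hmean, hk0, hfk⟩
  rw [← ENNReal.toReal_zero]
  refine (ENNReal.tendsto_toReal ENNReal.zero_ne_top).comp (tendsto_cmLaw_zero ν ?_)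
  filter_upwards [ae_tendsto_empDens_iidDegrees hf, ae_tendsto_degSum_iidDegrees_div hf hmean]
    with ω hdens hdeg
  have hL1 := tendsto_expect_abs_ANNR_erase (hasSum_sizeBiased hf0 hk)
    (fun l => div_nonneg (mul_nonneg (Nat.cast_nonneg l) (hf0 l)) hμ.le) hk
    (tendsto_degSum_atTop hdeg hμ) fun l => tendsto_empSB (hdens l) hdeg hμ.ne'
  refine tendsto_of_tendsto_of_tendsto_of_le_of_le tendsto_const_nhds ?_ (fun _ => zero_le)
    fun n => uniformMatching_ANNR_erase_le (iidDegrees n ω) k _ hδ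
  simpa using ENNReal.tendsto_ofReal (hL1.div_const δ)

/-- Convergence of the ANNR in the erased configuration model: for `𝒟`
regularly varying with exponent `γ > 1`, any `δ > 0` and any `k` with `f^*(k) > 0`,
`P(|Θ̂_n(k) − E[F^*(𝒟^*)]| 1{f_n(k) > 0} > δ) → 0`, where `f_n` is the empirical density
of the pre-erasure degrees. -/
theorem stmt13 (ν : Measure ℕ) [IsProbabilityMeasure ν] (f : ℕ → ℝ)
    (hf : ∀ k, f k = (ν {k}).toReal) (hzero : ν {0} = 0)
    (γ : ℝ) (hγ : 1 < γ)
    (l : ℝ → ℝ) (hsv : SlowlyVarying l) (hmono : EventuallyMonotone l)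
    (hreg : ∀ k : ℕ, 1 ≤ k → f k = l k * (k : ℝ) ^ (-γ - 1))
    (k : ℕ) (hk : 0 < sizeBiased f k)
    (δ : ℝ) (hδ : 0 < δ) :
    Tendsto (fun n : ℕ =>
        ((cmLaw n ν) {p : (Fin n → ℕ) × (Fin n → Fin n → ℕ) |
            δ < (if 0 < empDens p.1 k then
                |ANNR (eraseDeg p.2) (erase p.2) k -
                  ∑' j : ℕ, sizeBiased f j * cdfOf (sizeBiased f) j|
              else 0)}).toReal)
      atTop (nhds 0) := by
  obtain ⟨hmean, hk0, hfk⟩ := (sizeBiased_pos_iff fun l => hf l ▸ ENNReal.toReal_nonneg).1 hk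
  exact stmt13_general ν f hf hmean k hk0 hfk δ hδ

end ANNDPaper
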